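/- arXiv:2003.10139 — 2 statements merged into one kernel-verified Lean document; each statement's English description precedes it below -/
import Mathlib

section
/- Let M be a matching of a graph G of size m ≥ 2 that is also a strong clique of G, and let x ∈ V(M). If M is not x-special and x has a neighbor in V(M) \ {x, x'}, then for every ℓ ∈ {1,…,m−1} there exists an (x,M)-path of length ℓ in G. -/
/-- A strong clique of `G`: a set of edges of `G` such that every pair of edges
either shares an endpoint or is joined by an edge of `G`. -/
def IsStrongClique {V : Type*} (G : SimpleGraph V) (S : Set (Sym2 V)) : Prop :=
  S ⊆ G.edgeSet ∧
    ∀ e ∈ S, ∀ f ∈ S, ∃ a b, a ∈ e ∧ b ∈ f ∧ (a = b ∨ G.Adj a b)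

/-- `M` is a matching of `G`: a set of edges of `G` that are pairwise disjoint. -/
def IsMatchingSet {V : Type*} (G : SimpleGraph V) (M : Set (Sym2 V)) : Prop :=
  M ⊆ G.edgeSet ∧ ∀ e ∈ M, ∀ f ∈ M, e ≠ f → ∀ v : V, v ∈ e → v ∉ f

/-- An `(x, M)`-path: a path `P` in `G[V(M)]` starting at `x` such that the last edge of
`P` is not in `M`, and every edge of `M` with both endpoints on `P` is an edge of `P`. -/
def IsXMPath {V : Type*} (G : SimpleGraph V) (M : Finset (Sym2 V))
    {x y : V} (P : G.Walk x y) : Prop :=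
  P.IsPath ∧
    (∀ v ∈ P.support, ∃ e ∈ M, v ∈ e) ∧
    (∀ e ∈ P.edges.getLast?, e ∉ M) ∧
    (∀ e ∈ M, (∀ v ∈ e, v ∈ P.support) → e ∈ P.edges)

/-- `M` is an `x`-special matching, where `x'` is the `M`-partner of `x`: every edge
`e ≠ xx'` of `M` can be written as `e = (hd e)(tl e)` where `x` is adjacent to all heads
and to nothing else among `V(M) \ {x, x'}`, `x'` is adjacent to no head or tail, the tails
are pairwise adjacent, the heads are pairwise non-adjacent, and no head is adjacent to a
tail of a different edge. -/
def IsSpecialMatching {V : Type*} (G : SimpleGraph V) (M : Finset (Sym2 V))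
    (x x' : V) : Prop :=
  s(x, x') ∈ M ∧
    ∃ hd tl : Sym2 V → V,
      ∀ e ∈ M, e ≠ s(x, x') →
        e = s(hd e, tl e) ∧
        G.Adj x (hd e) ∧ ¬ G.Adj x (tl e) ∧
        ¬ G.Adj x' (hd e) ∧ ¬ G.Adj x' (tl e) ∧
        ∀ f ∈ M, f ≠ s(x, x') → e ≠ f →
          G.Adj (tl e) (tl f) ∧ ¬ G.Adj (hd e) (hd f) ∧ ¬ G.Adj (hd e) (tl f)

section Core

/-- Inductive description of (x,M)-paths: current end, touched edges, length. -/
inductive Pth {V E : Type*} [DecidableEq E] (adj : V → V → Prop) (p : V → V) (e : V → E)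
    (M : Finset E) (x : V) : V → Finset E → ℕ → Prop
  | base : Pth adj p e M x x {e x} 0
  | one {y z : V} {S : Finset E} {n : ℕ} : Pth adj p e M x y S n → adj y z → e z ∈ M →
      e z ∉ S → Pth adj p e M x z (insert (e z) S) (n + 1)
  | two {y z : V} {S : Finset E} {n : ℕ} : Pth adj p e M x y S n → adj (p y) z → e z ∈ M →
      e z ∉ S → Pth adj p e M x z (insert (e z) S) (n + 2)

/-- `w` is a hub for the edges outside `S`. -/
def Hub {V E : Type*} (adj : V → V → Prop) (p : V → V) (e : V → E)
    (M : Finset E) (w : V) (S : Finset E) : Prop :=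
  ∀ a, e a ∈ M → e a ∉ S → (adj w a ∨ adj w (p a)) ∧ ¬ (adj w a ∧ adj w (p a)) ∧
    ¬ adj (p w) a ∧ (adj w a → ∀ b, e b ∈ M → e b ∉ S → e b ≠ e a → ¬ adj a b)

variable {V E : Type*} [DecidableEq E] {adj : V → V → Prop} {p : V → V} {e : V → E}
  {M : Finset E} {x : V}

theorem Pth.card_le {y : V} {S : Finset E} {n : ℕ} (h : Pth adj p e M x y S n) :
    S.card ≤ n + 1 := by
  induction h with
  | base => simp
  | one _ _ _ _ ih => exact (Finset.card_insert_le _ _).trans (by omega)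
  | two _ _ _ _ ih => exact (Finset.card_insert_le _ _).trans (by omega)

theorem Pth.mem {y : V} {S : Finset E} {n : ℕ} (h : Pth adj p e M x y S n) :
    e y ∈ S := by
  cases h <;> simp

theorem pick (hsurj : ∀ f ∈ M, ∃ a, e a = f) (F : Finset E) (h : F.card < M.card) :
    ∃ a, e a ∈ M ∧ e a ∉ F := by
  obtain ⟨f, hf, hF⟩ := Finset.exists_mem_notMem_of_card_lt_card h
  obtain ⟨a, rfl⟩ := hsurj f hf
  exact ⟨a, hf, hF⟩

theorem Hub.pick (hsurj : ∀ f ∈ M, ∃ a, e a = f) (hep : ∀ v, e (p v) = e v)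
    {w : V} {S : Finset E} (hH : Hub adj p e M w S) (F : Finset E) (hSF : S ⊆ F)
    (h : F.card < M.card) : ∃ a, e a ∈ M ∧ e a ∉ F ∧ adj w a := by
  obtain ⟨a, ha, haF⟩ := _root_.pick hsurj F h
  rcases (hH a ha (fun h => haF (hSF h))).1 with h1 | h1
  · exact ⟨a, ha, haF, h1⟩
  · exact ⟨p a, by rwa [hep], by rwa [hep], h1⟩

theorem Hub.tails (hep : ∀ v, e (p v) = e v)
    (hst : ∀ a b, e a ∈ M → e b ∈ M → e a ≠ e b →
      adj a b ∨ adj a (p b) ∨ adj (p a) b ∨ adj (p a) (p b))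
    (hsymm : ∀ a b, adj a b → adj b a)
    {w : V} {S : Finset E} (hH : Hub adj p e M w S) {a b : V} (ha : e a ∈ M) (hb : e b ∈ M)
    (haS : e a ∉ S) (hbS : e b ∉ S) (hab : e a ≠ e b) (hwa : adj w a) (hwb : adj w b) :
    adj (p a) (p b) := by
  have h1 := (hH a ha haS).2.2.2 hwa
  have h2 := (hH b hb hbS).2.2.2 hwb
  rcases hst a b ha hb hab with h | h | h | h
  · exact absurd h (h1 b hb hbS hab.symm)
  · exact absurd h (h1 (p b) (by rwa [hep]) (by rwa [hep]) (by rw [hep]; exact hab.symm))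
  · exact absurd (hsymm _ _ h) (h2 (p a) (by rwa [hep]) (by rwa [hep]) (by rw [hep]; exact hab))
  · exact h

theorem reach (hsurj : ∀ f ∈ M, ∃ a, e a = f) (hep : ∀ v, e (p v) = e v)
    (hpp : ∀ v, p (p v) = v)
    (hst : ∀ a b, e a ∈ M → e b ∈ M → e a ≠ e b →
      adj a b ∨ adj a (p b) ∨ adj (p a) b ∨ adj (p a) (p b))
    (hsymm : ∀ a b, adj a b → adj b a) (hSM : ∀ y S n, Pth adj p e M x y S n → S ⊆ M)
    {u w : V} {S : Finset E} {j ℓ : ℕ} (hP : Pth adj p e M x u S j) (hw : e w ∈ M)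
    (hwS : e w ∉ S) (hH : Hub adj p e M w (insert (e w) S)) (h3 : j + 3 ≤ ℓ) (h5 : ℓ ≤ j + 5)
    (hl : ℓ + 1 ≤ M.card) : ∃ y S, Pth adj p e M x y S ℓ := by
  have hc := hP.card_le
  have hc1 := Finset.card_insert_le (e w) S
  obtain ⟨a, haM, haS, hwa⟩ := hH.pick hsurj hep _ (Finset.Subset.refl _) (by omega)
  have hc2 := Finset.card_insert_le (e a) (insert (e w) S)
  obtain ⟨b, hbM, hbS, hwb⟩ := hH.pick hsurj hep (insert (e a) (insert (e w) S))
    (Finset.subset_insert _ _) (by omega)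
  have hc3 := Finset.card_insert_le (e b) (insert (e a) (insert (e w) S))
  have hcc : j + 4 ≤ ℓ → ∃ c, e c ∈ M ∧ e c ∉ (insert (e b) (insert (e a) (insert (e w) S))) ∧
      adj w c := fun h => hH.pick hsurj hep _ (by intro t ht; simp at ht ⊢; tauto) (by omega)
  have huM := hSM _ _ _ hP hP.mem
  have huS := hP.mem
  simp only [Finset.mem_insert, not_or] at haS hbS hcc
  have hab : adj (p a) (p b) := hH.tails hep hst hsymm haM hbM (by simp [haS]) (by simp [hbS])
    (Ne.symm hbS.1) hwa hwb
  have hac : ∀ c, e c ∈ M → (¬ e c = e b ∧ ¬ e c = e a ∧ ¬ e c = e w ∧ e c ∉ S) → adj w c →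
      adj (p b) (p c) := fun c hcM hcS hwc =>
    hH.tails hep hst hsymm hbM hcM (by simp [hbS]) (by simp [hcS]) (Ne.symm hcS.1) hwb hwc
  obtain ⟨n1, n2⟩ := haS
  obtain ⟨n3, n4, n5⟩ := hbS
  have n1' := Ne.symm n1
  have n3' := Ne.symm n3
  have n4' := Ne.symm n4
  have haw := hsymm _ _ hwa
  have hbw := hsymm _ _ hwb
  -- from a head
  have key1 : ∀ i, Pth adj p e M x a (insert (e a) S) i → i + 1 ≤ ℓ → ℓ ≤ i + 4 →
      (ℓ = i + 3 → j + 4 ≤ ℓ) →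
      ∃ y S, Pth adj p e M x y S ℓ := by
    intro i hi h1 h4 hh
    have d2 : Pth adj p e M x (p b) _ (i + 2) :=
      hi.two (z := p b) hab (by rwa [hep]) (by simp [hep, n3, n5])
    obtain rfl | rfl | rfl | rfl : ℓ = i + 1 ∨ ℓ = i + 2 ∨ ℓ = i + 3 ∨ ℓ = i + 4 := by omega
    · exact ⟨w, _, hi.one haw hw (by simp [hwS, n1'])⟩
    · exact ⟨_, _, d2⟩
    · obtain ⟨c, hcM, hcS, hwc⟩ := hcc (hh rfl)
      have n6' := Ne.symm hcS.2.2.1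
      exact ⟨_, _, d2.one (z := p c) (hac c hcM hcS hwc) (by rwa [hep]) (by simp [hep, hcS])⟩
    · exact ⟨_, _, d2.two (z := w) (by rwa [hpp]) hw (by simp [hep, hwS, n1', n4'])⟩
  have key2 : ∀ i, Pth adj p e M x (p a) (insert (e a) S) i → i + 1 ≤ ℓ → ℓ ≤ i + 4 →
      (ℓ = i + 4 → j + 4 ≤ ℓ) →
      ∃ y S, Pth adj p e M x y S ℓ := by
    intro i hi h1 h4 hh
    have d1 : Pth adj p e M x (p b) _ (i + 1) :=
      hi.one (z := p b) hab (by rwa [hep]) (by simp [hep, n3, n5])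
    obtain rfl | rfl | rfl | rfl : ℓ = i + 1 ∨ ℓ = i + 2 ∨ ℓ = i + 3 ∨ ℓ = i + 4 := by omega
    · exact ⟨_, _, d1⟩
    · exact ⟨w, _, hi.two (by rwa [hpp]) hw (by simp [hwS, n1'])⟩
    · exact ⟨_, _, d1.two (z := w) (by rwa [hpp]) hw (by simp [hep, hwS, n1', n4'])⟩
    · obtain ⟨c, hcM, hcS, hwc⟩ := hcc (hh rfl)
      have n6' := Ne.symm hcS.2.2.1
      have d2 : Pth adj p e M x (p c) _ (i + 2) :=
        d1.one (z := p c) (hac c hcM hcS hwc) (by rwa [hep]) (by simp [hep, hcS])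
      exact ⟨_, _, d2.two (z := w) (by rw [hpp]; exact hsymm _ _ hwc) hw (by simp [hep, hwS, n1', n4', n6'])⟩
  have hua : e u ≠ e a := fun h => n2 (h ▸ huS)
  rcases hst u a huM haM hua with h | h | h | h
  · exact key1 (j + 1) (hP.one h haM n2) (by omega) (by omega) (by omega)
  · have := hP.one (z := p a) h (by rwa [hep]) (by rw [hep]; exact n2)
    rw [hep] at this
    exact key2 (j + 1) this (by omega) (by omega) (by omega)
  · exact key1 (j + 2) (hP.two h haM n2) (by omega) (by omega) (by omega)
  · have := hP.two (z := p a) h (by rwa [hep]) (by rw [hep]; exact n2)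
    rw [hep] at this
    exact key2 (j + 2) this (by omega) (by omega) (by omega)

/-- Building the hub structure. -/
theorem mkHub (hsurj : ∀ f ∈ M, ∃ a, e a = f) (hep : ∀ v, e (p v) = e v)
    (hst : ∀ a b, e a ∈ M → e b ∈ M → e a ≠ e b →
      adj a b ∨ adj a (p b) ∨ adj (p a) b ∨ adj (p a) (p b))
    {w : V} {S : Finset E} (hw : e w ∈ M) (hwS : e w ∈ S)
    (hcard : S.card + 2 ≤ M.card)
    (h1 : ∀ a b, e a ∈ M → e a ∉ S → adj w a → e b ∈ M → e b ∉ S → e b ≠ e a → ¬ adj a b)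
    (h2 : ∀ a, e a ∈ M → e a ∉ S → ¬ adj (p w) a) : Hub adj p e M w S := by
  intro a ha haS
  refine ⟨?_, ?_, h2 a ha haS, fun hwa b hb hbS hba => h1 a b ha haS hwa hb hbS hba⟩
  · rcases hst w a hw ha (fun h => haS (h ▸ hwS)) with h | h | h | h
    · exact Or.inl h
    · exact Or.inr h
    · exact absurd h (h2 a ha haS)
    · exact absurd h (h2 (p a) (by rwa [hep]) (by rwa [hep]))
  · rintro ⟨hwa, hwa'⟩
    have hc := Finset.card_insert_le (e a) S
    obtain ⟨b, hb, hbS⟩ := pick (e := e) hsurj (insert (e a) S) (by omega)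
    simp only [Finset.mem_insert, not_or] at hbS
    have e1 : e (p a) ∈ M := by rwa [hep]
    have e2 : e (p a) ∉ S := by rwa [hep]
    have e3 : e (p b) ∈ M := by rwa [hep]
    have e4 : e (p b) ∉ S := by rw [hep]; exact hbS.2
    rcases hst a b ha hb (Ne.symm hbS.1) with h | h | h | h
    · exact h1 a b ha haS hwa hb hbS.2 hbS.1 h
    · exact h1 a (p b) ha haS hwa e3 e4 (by rw [hep]; exact hbS.1) h
    · exact h1 (p a) b e1 e2 hwa' hb hbS.2 (by rw [hep]; exact hbS.1) h
    · exact h1 (p a) (p b) e1 e2 hwa' e3 e4 (by rw [hep, hep]; exact hbS.1) h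

theorem core (hsurj : ∀ f ∈ M, ∃ a, e a = f) (hep : ∀ v, e (p v) = e v)
    (hpp : ∀ v, p (p v) = v)
    (hst : ∀ a b, e a ∈ M → e b ∈ M → e a ≠ e b →
      adj a b ∨ adj a (p b) ∨ adj (p a) b ∨ adj (p a) (p b))
    (hsymm : ∀ a b, adj a b → adj b a) (hx : e x ∈ M)
    (hns : ¬ Hub adj p e M x {e x})
    (hnbr : ∃ y, e y ∈ M ∧ e y ≠ e x ∧ adj x y) :
    ∀ ℓ, ℓ + 1 ≤ M.card → ∃ y S, Pth adj p e M x y S ℓ := by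
  have hSM : ∀ y S n, Pth adj p e M x y S n → S ⊆ M := by
    intro y S n h
    induction h with
    | base => simpa using hx
    | one _ _ hz _ ih => exact Finset.insert_subset hz ih
    | two _ _ hz _ ih => exact Finset.insert_subset hz ih
  obtain ⟨y₀, hy₀M, hy₀x, hxy₀⟩ := hnbr
  intro ℓ
  induction ℓ using Nat.strong_induction_on with
  | _ ℓ ih =>
  intro hl
  by_contra hE
  have hE' : ∀ y S n, n = ℓ → ¬ Pth adj p e M x y S n := by
    rintro y S n rfl h
    exact hE ⟨_, _, h⟩
  -- Lemma A
  have lemA : ∀ w S n a, Pth adj p e M x w S n → n + 2 = ℓ → e a ∈ M → e a ∉ S → ¬ adj w a := by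
    intro w S n a hP hn _ _ _
    have hc := hP.card_le
    have hH : Hub adj p e M w S := by
      refine mkHub hsurj hep hst (hSM _ _ _ hP hP.mem) hP.mem (by omega) ?_ ?_
      · intro a b ha haS hwa hb hbS hba hab
        exact hE' _ _ _ (by omega) ((hP.one hwa ha haS).one hab hb (by simp; tauto))
      · intro a ha haS hwa
        exact hE' _ _ _ (by omega) (hP.two hwa ha haS)
    cases hP with
    | base => exact hns hH
    | one hP hadj hz hzS =>
      exact hE (reach hsurj hep hpp hst hsymm hSM hP hz hzS hH (by omega) (by omega) hl)
    | two hP hadj hz hzS =>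
      exact hE (reach hsurj hep hpp hst hsymm hSM hP hz hzS hH (by omega) (by omega) hl)
  have lemB : ∀ v S n a, Pth adj p e M x v S n → n + 3 = ℓ → e a ∈ M → e a ∉ S →
      ¬ adj (p v) a := by
    intro v S n a hP hn _ _ _
    have hc := hP.card_le
    have hvT : ∀ b, e b ∈ M → e b ∉ S → ¬ adj v b := by
      intro b hb hbS hvb
      have hPb := hP.one hvb hb hbS
      have hcb := hPb.card_le
      obtain ⟨c, hcM, hcS⟩ := pick (e := e) hsurj (insert (e b) S) (by omega)
      have e3 : e (p c) ∈ M := by rwa [hep]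
      have e4 : e (p c) ∉ insert (e b) S := by rwa [hep]
      rcases hst b c hb hcM (by rintro h; apply hcS; simp [h]) with h | h | h | h
      · exact lemA _ _ _ _ hPb (by omega) hcM hcS h
      · exact lemA _ _ _ _ hPb (by omega) e3 e4 h
      · exact hE' _ _ _ (by omega) (hPb.two h hcM hcS)
      · exact hE' _ _ _ (by omega) (hPb.two h e3 e4)
    have hH : Hub adj p e M (p v) S := by
      refine mkHub hsurj hep hst (by rw [hep]; exact hSM _ _ _ hP hP.mem)
        (by rw [hep]; exact hP.mem) (by omega) ?_ ?_
      · intro a b ha haS hwa hb hbS hba hab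
        exact hE' _ _ _ (by omega) ((hP.two hwa ha haS).one hab hb (by simp; tauto))
      · rw [hpp]; exact hvT
    cases hP with
    | base => exact hvT y₀ hy₀M (by simpa using hy₀x) hxy₀
    | one hP hadj hz hzS =>
      exact hE (reach hsurj hep hpp hst hsymm hSM hP (w := p v) (by rwa [hep]) (by rwa [hep])
        (by rwa [hep]) (by omega) (by omega) hl)
    | two hP hadj hz hzS =>
      exact hE (reach hsurj hep hpp hst hsymm hSM hP (w := p v) (by rwa [hep]) (by rwa [hep])
        (by rwa [hep]) (by omega) (by omega) hl)
  rcases Nat.lt_or_ge ℓ 2 with h2 | h2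
  · obtain rfl | rfl : ℓ = 0 ∨ ℓ = 1 := by omega
    · exact hE ⟨_, _, Pth.base⟩
    · exact hE ⟨_, _, Pth.base.one hxy₀ hy₀M (by simpa using hy₀x)⟩
  · obtain ⟨y, S, hP⟩ := ih (ℓ - 1) (by omega) (by omega)
    generalize hk : ℓ - 1 = k at hP
    cases hP with
    | base => omega
    | one hP hadj hz hzS => exact lemA _ _ _ _ hP (by omega) hz hzS hadj
    | two hP hadj hz hzS => exact lemB _ _ _ _ hP (by omega) hz hzS hadj

end Core

theorem Pth.sound {V : Type*} [DecidableEq V] (G : SimpleGraph V) (M : Finset (Sym2 V))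
    (p : V → V) (hpp : ∀ v, p (p v) = v) (hMp : ∀ v u, s(v, u) ∈ M → u = p v)
    (hMG : ∀ v u, s(v, u) ∈ M → G.Adj v u)
    (x : V) (hx : s(x, p x) ∈ M) {y : V} {S : Finset (Sym2 V)} {n : ℕ}
    (h : Pth G.Adj p (fun v => s(v, p v)) M x y S n) :
    ∃ P : G.Walk x y, IsXMPath G M P ∧ P.length = n ∧ (∀ v ∈ P.support, s(v, p v) ∈ S) ∧
      S ⊆ M ∧ p y ∉ P.support := by
  have hep : ∀ v, s(p v, p (p v)) = s(v, p v) := by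
    intro v; rw [hpp]; exact Sym2.eq_swap
  have hne : ∀ v, s(v, p v) ∈ M → p v ≠ v := fun v hv => (hMG _ _ hv).ne'
  -- one-step extension
  have step : ∀ (y z : V) (P : G.Walk x y) (S : Finset (Sym2 V)) (hyz : G.Adj y z),
      P.IsPath → (∀ v ∈ P.support, s(v, p v) ∈ S) → S ⊆ M →
      (∀ e ∈ M, (∀ v ∈ e, v ∈ P.support) → e ∈ P.edges) → s(z, p z) ∈ M → s(z, p z) ∉ S →
      ∃ P' : G.Walk x z, IsXMPath G M P' ∧ P'.length = P.length + 1 ∧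
        (∀ v ∈ P'.support, s(v, p v) ∈ insert s(z, p z) S) ∧
        insert s(z, p z) S ⊆ M ∧ p z ∉ P'.support := by
    intro y z P S hyz hP hsup hSM h4 hz hzS
    have hzP : z ∉ P.support := fun h => hzS (hsup z h)
    have hpzP : p z ∉ P.support := fun h => hzS (by rw [← hep]; exact hsup _ h)
    have hins : insert s(z, p z) S ⊆ M := Finset.insert_subset hz hSM
    have hsup' : ∀ v ∈ (P.concat hyz).support, s(v, p v) ∈ insert s(z, p z) S := by
      intro v hv
      rw [SimpleGraph.Walk.support_concat] at hv
      simp only [List.concat_eq_append, List.mem_append, List.mem_singleton] at hv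
      rcases hv with hv | rfl
      · exact Finset.mem_insert_of_mem (hsup v hv)
      · exact Finset.mem_insert_self _ _
    have hpz' : p z ∉ (P.concat hyz).support := by
      rw [SimpleGraph.Walk.support_concat]
      simp only [List.concat_eq_append, List.mem_append, List.mem_singleton, not_or]
      exact ⟨hpzP, hne z hz⟩
    refine ⟨P.concat hyz, ⟨hP.concat hzP hyz, ?_, ?_, ?_⟩, by simp, hsup', hins, hpz'⟩
    · intro v hv
      exact ⟨_, hins (hsup' v hv), by simp⟩
    · intro f hf hfM
      rw [SimpleGraph.Walk.edges_concat] at hf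
      simp at hf
      subst hf
      have h1 := hMp z y (by rwa [Sym2.eq_swap])
      exact hpzP (h1 ▸ P.end_mem_support)
    · intro f hfM hf
      rw [SimpleGraph.Walk.edges_concat]
      simp only [List.concat_eq_append, List.mem_append, List.mem_singleton]
      left
      apply h4 f hfM
      intro v hv
      have h1 := hf v hv
      rw [SimpleGraph.Walk.support_concat] at h1
      simp only [List.concat_eq_append, List.mem_append, List.mem_singleton] at h1
      rcases h1 with h1 | rfl
      · exact h1
      · exfalso
        obtain ⟨u, rfl⟩ := hv
        have := hMp _ _ hfM
        subst this
        exact hpz' (hf _ (by simp))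
  induction h with
  | base =>
    refine ⟨SimpleGraph.Walk.nil, ⟨by simp, ?_, by simp, ?_⟩, by simp, by simp, by simpa using hx,
      by simpa using hne x hx⟩
    · intro v hv
      simp at hv
      subst hv
      exact ⟨_, hx, by simp⟩
    · intro f hf h
      exfalso
      induction f with
      | _ a b =>
        have h1 := h a (by simp)
        have h2 := h b (by simp)
        simp at h1 h2
        subst h1 h2
        exact (hMG _ _ hf).ne rfl
  | one hP hadj hz hzS ih =>
    obtain ⟨P, hPX, hlen, hsup, hSM, hpy⟩ := ih
    obtain ⟨P', h1, h2, h3⟩ := step _ _ P _ hadj hPX.1 hsup hSM hPX.2.2.2 hz hzS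
    exact ⟨P', h1, by omega, h3⟩
  | @two y z S n hP hadj hz hzS ih =>
    obtain ⟨P, hPX, hlen, hsup, hSM, hpy⟩ := ih
    have hyS : s(y, p y) ∈ S := hsup y P.end_mem_support
    have hyp : G.Adj y (p y) := hMG _ _ (hSM hyS)
    obtain ⟨P', h1, h2, h3⟩ := step _ _ (P.concat hyp) S hadj (hPX.1.concat hpy hyp) (by
      intro v hv
      rw [SimpleGraph.Walk.support_concat] at hv
      simp only [List.concat_eq_append, List.mem_append, List.mem_singleton] at hv
      rcases hv with hv | rfl
      · exact hsup v hv
      · rw [hep]; exact hyS) hSM (by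
      intro f hfM hf
      rw [SimpleGraph.Walk.edges_concat]
      simp only [List.concat_eq_append, List.mem_append, List.mem_singleton]
      by_cases hpf : p y ∈ f
      · right
        obtain ⟨u, rfl⟩ := hpf
        have := hMp _ _ hfM
        rw [hpp] at this
        subst this
        exact Sym2.eq_swap
      · left
        apply hPX.2.2.2 f hfM
        intro v hv
        have h1 := hf v hv
        rw [SimpleGraph.Walk.support_concat] at h1
        simp only [List.concat_eq_append, List.mem_append, List.mem_singleton] at h1
        rcases h1 with h1 | rfl
        · exact h1
        · exact absurd hv hpf) hz hzS
    refine ⟨P', h1, ?_, h3⟩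
    rw [h2, SimpleGraph.Walk.length_concat, hlen]

/-- Let `M` be a matching of `G` of size `m ≥ 2` that is also a strong clique of `G`, and
let `x ∈ V(M)` with `M`-partner `x'`. If `M` is not `x`-special and `x` has a neighbor in
`V(M) \ {x, x'}`, then for every `ℓ ∈ {1, …, m - 1}` there exists an `(x, M)`-path of
length `ℓ` in `G`. -/
theorem stmt16 {V : Type*} [Fintype V] [DecidableEq V] (G : SimpleGraph V)
    (M : Finset (Sym2 V))
    (hmatch : IsMatchingSet G ↑M) (hsc : IsStrongClique G ↑M)
    (m : ℕ) (hm : M.card = m) (hm2 : 2 ≤ m)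
    (x x' : V) (hx : s(x, x') ∈ M)
    (hnspecial : ¬ IsSpecialMatching G M x x')
    (hnbr : ∃ y : V, (∃ e ∈ M, y ∈ e) ∧ y ≠ x ∧ y ≠ x' ∧ G.Adj x y) :
    ∀ ℓ : ℕ, 1 ≤ ℓ → ℓ ≤ m - 1 →
      ∃ (y : V) (P : G.Walk x y), IsXMPath G M P ∧ P.length = ℓ := by
  classical
  have huniq : ∀ v u w, s(v, u) ∈ M → s(v, w) ∈ M → u = w := by
    intro v u w h1 h2
    by_contra hne
    exact hmatch.2 _ h1 _ h2 (fun h => hne (Sym2.congr_right.1 h)) v (by simp) (by simp)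
  have hMG : ∀ v u, s(v, u) ∈ M → G.Adj v u := fun v u h => hmatch.1 h
  let p : V → V := fun v => if h : ∃ u, s(v, u) ∈ M then h.choose else v
  have hMp : ∀ v u, s(v, u) ∈ M → u = p v := by
    intro v u h
    have h' : ∃ u, s(v, u) ∈ M := ⟨u, h⟩
    have : p v = h'.choose := dif_pos h'
    rw [this]
    exact huniq v _ _ h h'.choose_spec
  have hpp : ∀ v, p (p v) = v := by
    intro v
    by_cases h : ∃ u, s(v, u) ∈ M
    · obtain ⟨u, hu⟩ := h
      rw [← hMp v u hu]
      exact (hMp u v (by rwa [Sym2.eq_swap])).symm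
    · have : p v = v := dif_neg h
      rw [this, this]
  have hep : ∀ v, s(p v, p (p v)) = s(v, p v) := by
    intro v; rw [hpp]; exact Sym2.eq_swap
  obtain rfl : x' = p x := hMp _ _ hx
  have hst : ∀ a b, s(a, p a) ∈ M → s(b, p b) ∈ M → s(a, p a) ≠ s(b, p b) →
      G.Adj a b ∨ G.Adj a (p b) ∨ G.Adj (p a) b ∨ G.Adj (p a) (p b) := by
    intro a b ha hb hab
    obtain ⟨c, d, hc, hd, hcd⟩ := hsc.2 _ ha _ hb
    have hcd' : G.Adj c d := by
      rcases hcd with rfl | h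
      · exact absurd hd (hmatch.2 _ ha _ hb hab c hc)
      · exact h
    simp only [Sym2.mem_iff] at hc hd
    rcases hc with rfl | rfl <;> rcases hd with rfl | rfl <;> tauto
  intro ℓ hl1 hl2
  suffices hh : (¬ Hub G.Adj p (fun v => s(v, p v)) M x {s(x, p x)}) ∧
      ∃ y, s(y, p y) ∈ M ∧ s(y, p y) ≠ s(x, p x) ∧ G.Adj x y by
    obtain ⟨y, S, hP⟩ := core (adj := G.Adj) (p := p) (e := fun v => s(v, p v)) (M := M) (x := x)
      (by
        intro f hf
        induction f with
        | _ a b => exact ⟨a, by rw [← hMp a b hf]⟩)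
      hep hpp hst (fun a b h => h.symm) hx hh.1 hh.2 ℓ (by omega)
    obtain ⟨P, h1, h2, _⟩ := Pth.sound G M p hpp hMp hMG x hx hP
    exact ⟨y, P, h1, h2⟩
  constructor
  · intro hH
    apply hnspecial
    have hch : ∀ f : Sym2 V, ∃ a, f ∈ M → f ≠ s(x, p x) → f = s(a, p a) ∧ G.Adj x a := by
      intro f
      by_cases hf : f ∈ M ∧ f ≠ s(x, p x)
      · obtain ⟨hfM, hfx⟩ := hf
        induction f with
        | _ a b =>
          obtain rfl := hMp a b hfM
          rcases (hH a hfM (by simpa using hfx)).1 with h | h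
          · exact ⟨a, fun _ _ => ⟨rfl, h⟩⟩
          · exact ⟨p a, fun _ _ => ⟨(hep a).symm, h⟩⟩
      · exact ⟨x, fun h1 h2 => absurd ⟨h1, h2⟩ hf⟩
    choose hd hhd using hch
    refine ⟨hx, hd, fun f => p (hd f), ?_⟩
    intro f hfM hfx
    obtain ⟨hf1, hf2⟩ := hhd f hfM hfx
    have q1 : s(hd f, p (hd f)) ∈ M := hf1 ▸ hfM
    have q2 : s(hd f, p (hd f)) ∉ ({s(x, p x)} : Finset (Sym2 V)) := by
      rw [← hf1]; simpa using hfx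
    have H := hH (hd f) q1 q2
    have H' := hH (p (hd f)) (by beta_reduce; rw [hep]; exact q1) (by beta_reduce; rw [hep]; exact q2)
    refine ⟨hf1, hf2, fun h => H.2.1 ⟨hf2, h⟩, H.2.2.1, H'.2.2.1, ?_⟩
    intro g hgM hgx hfg
    obtain ⟨hg1, hg2⟩ := hhd g hgM hgx
    have r1 : s(hd g, p (hd g)) ∈ M := hg1 ▸ hgM
    have r2 : s(hd g, p (hd g)) ∉ ({s(x, p x)} : Finset (Sym2 V)) := by
      rw [← hg1]; simpa using hgx
    have r3 : s(hd g, p (hd g)) ≠ s(hd f, p (hd f)) := by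
      rw [← hf1, ← hg1]; exact hfg.symm
    refine ⟨hH.tails hep hst (fun a b h => h.symm) q1 r1 q2 r2 r3.symm hf2 hg2,
      H.2.2.2 hf2 _ r1 r2 r3, H.2.2.2 hf2 (p (hd g)) ?_ ?_ ?_⟩
    · beta_reduce; rw [hep]; exact r1
    · beta_reduce; rw [hep]; exact r2
    · simp only [hep]; exact r3
  · obtain ⟨y, ⟨f, hfM, hyf⟩, hyx, hyx', hadj⟩ := hnbr
    obtain ⟨u, rfl⟩ := hyf
    obtain rfl := hMp _ _ hfM
    refine ⟨y, hfM, ?_, hadj⟩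
    intro h
    have : y ∈ s(x, p x) := by rw [← h]; simp
    simp only [Sym2.mem_iff] at this
    tauto
end

section
/- Let M be a matching of a graph G that is also a strong clique of G. If |M| = 2m ≥ 6, then G contains a cycle of length 2m. -/
namespace StrongCyc

/-! ### Case trees over small configurations

Vertices of a configuration of matching edges `0, 1, …, N-1` are coded as `2 * i + s`; a block
(a matching edge traversed by a cycle) is coded as `2 * v + d`, with entry vertex `v`; it is left
through `v` if `d = 0` and through the partner of `v` if `d = 1`. -/

/-- Case trees: `n i j` branches over how the matching edges `i`, `j` are joined, `f j` over how
edge `0` is joined to the first endpoint of edge `j`; a leaf names a block list in base 32. -/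
inductive CTree
  | l (c : ℕ)
  | f (j : ℕ) (a b : CTree)
  | n (i j : ℕ) (a b c d : CTree)

def decodeAux : ℕ → ℕ → List ℕ
  | 0, _ => []
  | k + 1, c => if c = 0 then [] else (c % 32 - 1) :: decodeAux k (c / 32)

def CTree.check (k0 N : ℕ) (ok : List (ℕ × ℕ) → List ℕ → Bool) : CTree → List (ℕ × ℕ) → Bool
  | .l c, K => ok K (decodeAux 10 c)
  | .f j a b, K => Nat.ble k0 j && (Nat.blt j N &&
      (a.check k0 N ok ((0, 2 * j) :: K) && b.check k0 N ok ((1, 2 * j) :: K)))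
  | .n i j a b c d, K => Nat.blt i j && (Nat.blt j N &&
      (a.check k0 N ok ((2 * i, 2 * j) :: K) && (b.check k0 N ok ((2 * i, 2 * j + 1) :: K) &&
      (c.check k0 N ok ((2 * i + 1, 2 * j) :: K) &&
        d.check k0 N ok ((2 * i + 1, 2 * j + 1) :: K)))))

theorem CTree.sound {k0 N : ℕ} {ok : List (ℕ × ℕ) → List ℕ → Bool} (A : ℕ → ℕ → Prop)
    (hJ : ∀ i j, i < j → j < N →
      A (2 * i) (2 * j) ∨ A (2 * i) (2 * j + 1) ∨ A (2 * i + 1) (2 * j) ∨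
        A (2 * i + 1) (2 * j + 1))
    (hF : ∀ j, k0 ≤ j → j < N → A 0 (2 * j) ∨ A 1 (2 * j)) :
    ∀ (t : CTree) (K : List (ℕ × ℕ)), t.check k0 N ok K = true → (∀ p ∈ K, A p.1 p.2) →
      ∃ K' W, (∀ p ∈ K', A p.1 p.2) ∧ ok K' W = true := by
  intro t
  induction t with
  | l c => intro K h hK; exact ⟨K, _, hK, h⟩
  | f j a b iha ihb =>
    intro K h hK
    simp only [CTree.check, Bool.and_eq_true, Nat.ble_eq, Nat.blt_eq] at h
    obtain ⟨h1, h2, h3, h4⟩ := h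
    rcases hF j h1 h2 with h | h
    · exact iha _ h3 (List.forall_mem_cons.2 ⟨h, hK⟩)
    · exact ihb _ h4 (List.forall_mem_cons.2 ⟨h, hK⟩)
  | n i j a b c d iha ihb ihc ihd =>
    intro K h hK
    simp only [CTree.check, Bool.and_eq_true, Nat.blt_eq] at h
    obtain ⟨h1, h2, h3, h4, h5, h6⟩ := h
    rcases hJ i j h1 h2 with h | h | h | h
    · exact iha _ h3 (List.forall_mem_cons.2 ⟨h, hK⟩)
    · exact ihb _ h4 (List.forall_mem_cons.2 ⟨h, hK⟩)
    · exact ihc _ h5 (List.forall_mem_cons.2 ⟨h, hK⟩)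
    · exact ihd _ h6 (List.forall_mem_cons.2 ⟨h, hK⟩)

def knownB (K : List (ℕ × ℕ)) (v w : ℕ) : Bool :=
  K.any fun p => (Nat.beq p.1 v && Nat.beq p.2 w) || (Nat.beq p.1 w && Nat.beq p.2 v)

def flipN (v : ℕ) : ℕ := if v % 2 = 0 then v + 1 else v - 1

def exN (b : ℕ) : ℕ := if b % 2 = 1 then flipN (b / 2) else b / 2

def innerN (K : List (ℕ × ℕ)) : ℕ → List ℕ → Bool
  | _, [] => true
  | b, c :: w => knownB K (exN b) (c / 2) && innerN K c w

def lastN : ℕ → List ℕ → ℕ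
  | b, [] => exN b
  | _, c :: w => lastN c w

def nodupN : List ℕ → Bool
  | [] => true
  | b :: w => (w.all fun c => !(Nat.beq (b / 4) (c / 4))) && nodupN w

def wtN : List ℕ → ℕ
  | [] => 0
  | b :: w => 1 + b % 2 + wtN w

/-- The test made at the leaves of a case tree. -/
def okW (N wt : ℕ) (fin : List (ℕ × ℕ) → ℕ → ℕ → Bool) (K : List (ℕ × ℕ)) : List ℕ → Bool
  | [] => false
  | b :: w => ((b :: w).all fun c => Nat.blt (c / 4) N) && (nodupN (b :: w) &&
      (innerN K b w && (Nat.beq (wtN (b :: w)) wt && fin K (b / 2) (lastN b w))))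

def finWin (e : ℕ) (_ : List (ℕ × ℕ)) (a z : ℕ) : Bool := Nat.beq a 0 && Nat.beq z e

def finCyc (K : List (ℕ × ℕ)) (a z : ℕ) : Bool := knownB K z a

section trees

open CTree

/-- Single, double, single (two spare edges). -/
def treeSDS : CTree :=
  f 3 (f 4 (n 1 3 (n 3 4 (l 9647649) (n 2 3 (n 1 4 (l 9881761) (l 9653665) (l 9687457) (l
  9882817)) (l 309825) (l 407105) (l 407713)) (n 2 4 (l 10008737) (l 313793) (l 411073) (n 1 4 (l
  411809) (l 13211041) (l 9684417) (l 412865))) (n 2 4 (l 315841) (l 10074273) (n 1 4 (l 13145505)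
  (l 413857) (l 410817) (l 9686465)) (l 413121))) (l 301505) (n 3 4 (n 1 4 (l 9651617) (l 301633)
  (n 2 3 (l 9880769) (l 309441) (l 406721) (l 408097)) (l 9685409)) (l 9680449) (l 9683489) (n 2 3
  (l 311873) (l 309441) (l 406721) (l 409153))) (n 3 4 (l 9681441) (n 2 3 (l 311489) (l 309825) (l
  407105) (l 408769)) (n 2 3 (l 311489) (n 1 4 (l 9935393) (l 9949345) (l 9946305) (l 9936449)) (l
  410145) (l 408769)) (l 9682497))) (n 1 4 (l 301602) (n 2 4 (n 3 4 (n 1 3 (l 10098081) (l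
  10010785) (l 9680418) (n 2 3 (l 311489) (l 309794) (l 407074) (l 408769))) (l 9653665) (n 1 3 (l
  10008737) (l 301505) (n 2 3 (l 311842) (l 309441) (l 406721) (l 409122)) (l 9682466)) (l
  315841)) (n 3 4 (n 1 3 (l 10040481) (l 301505) (l 9680418) (n 2 3 (l 311489) (l 309794) (l
  407074) (l 408769))) (l 9653665) (l 313793) (n 1 3 (l 10074273) (l 301505) (l 10068385) (l
  10075329))) (l 413857) (l 12866)) (n 2 4 (n 3 4 (n 1 3 (l 10000801) (l 10010785) (l 9680418) (l
  10001857)) (l 9687457) (l 9684417) (l 315841)) (l 313537) (l 410817) (l 12866)) (l 302658))) (f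
  4 (n 1 3 (l 301474) (n 2 3 (n 3 4 (n 1 4 (l 9967137) (l 9883809) (l 9684386) (n 2 4 (l 315585)
  (l 313762) (l 411042) (l 412865))) (n 1 4 (l 9881761) (l 301633) (n 2 4 (l 315810) (l 313537) (l
  410817) (l 413090)) (l 9686434)) (l 9649697) (l 311873)) (n 3 4 (n 1 4 (l 9913505) (l 301633) (l
  9684386) (n 2 4 (l 315585) (l 313762) (l 411042) (l 412865))) (l 309825) (l 9649697) (n 1 4 (l
  9947297) (l 301633) (l 9937441) (l 9948353))) (l 409761) (l 12738)) (n 2 3 (n 3 4 (n 1 4 (l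
  9869857) (l 9883809) (l 9684386) (l 9870913)) (l 9680449) (l 9683489) (l 311873)) (l 309441) (l
  406721) (l 12738)) (l 302530)) (n 1 3 (l 301474) (n 2 3 (n 3 4 (n 1 4 (l 301602) (l 9883809) (l
  9684386) (l 302658)) (l 308802) (l 311842) (n 1 4 (l 301602) (l 9981089) (n 2 4 (l 10108065) (l
  314818) (l 410817) (l 12866)) (l 302658))) (n 3 4 (l 309794) (n 1 4 (l 301602) (l 9915553) (n 2
  4 (l 315810) (l 313537) (l 410817) (l 413090)) (l 9686434)) (n 1 4 (l 301602) (l 9949345) (l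
  9946305) (l 302658)) (l 310850)) (l 409761) (l 12738)) (n 2 3 (n 1 4 (l 301602) (n 3 4 (l
  9680418) (l 308802) (l 311842) (l 9981089)) (l 9870882) (l 302658)) (l 309441) (l 406721) (l
  12738)) (l 302530)))

/-- Single, double, double, single (two spare edges). -/
def treeSDDS : CTree :=
  f 4 (f 5 (n 1 4 (n 1 5 (n 2 4 (n 4 5 (l 446912033) (l 447273121) (l 447370401) (l 13980353)) (l
  447288993) (n 3 4 (l 454367905) (l 14231745) (l 17344705) (n 2 5 (l 17377953) (l 447419937) (l
  556127393) (l 17379009))) (n 3 4 (l 14297281) (l 456465057) (n 2 5 (l 17443489) (l 447419937) (l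
  558224545) (l 17444545)) (l 17410241))) (l 13966017) (n 4 5 (l 446908065) (l 446947873) (l
  446944833) (n 1 3 (l 13918785) (l 16962241) (l 13849281) (l 17031745))) (n 2 5 (l 13983937) (l
  447453729) (l 448535073) (n 3 5 (l 14428353) (l 460659233) (l 17570337) (l 17541313)))) (l
  13965889) (n 4 5 (n 1 5 (l 446912033) (l 13966017) (n 2 4 (l 447272129) (l 13977793) (n 3 5 (l
  458795201) (l 459518497) (l 559133217) (l 17515713)) (l 448353473)) (l 446945825)) (l 446940865)
  (l 446943905) (n 2 4 (l 13980353) (l 13977793) (n 1 5 (l 448420001) (l 13966017) (n 3 4 (l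
  14309569) (l 14231745) (l 17344705) (l 17422529)) (l 448421057)) (n 1 5 (l 448338593) (l
  13966017) (l 448387265) (l 446946881)))) (n 4 5 (l 446941857) (n 1 5 (n 2 4 (l 13979841) (l
  13978305) (l 448404129) (l 448354465)) (l 446914081) (l 446947873) (n 2 4 (l 13979841) (l
  447323841) (l 448405185) (l 448355521))) (n 2 5 (l 447401153) (l 13982273) (n 1 5 (l 448438849)
  (l 13966017) (l 446944833) (l 448536129)) (l 448482497)) (l 446942913))) (n 1 5 (l 13965986) (n
  4 5 (n 2 4 (l 447275169) (l 13978274) (n 1 4 (l 448304834) (l 13965889) (l 446940834) (n 1 3 (l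
  13912738) (l 17052193) (l 443958946) (l 531138))) (l 448356513)) (l 446914081) (n 2 4 (l
  13980322) (l 447340705) (l 448422049) (n 1 3 (l 13906497) (l 16964161) (l 443960994) (l
  531138))) (n 2 4 (l 447372449) (l 13979330) (l 14013122) (n 3 4 (l 14297281) (n 2 5 (l
  456860865) (l 14265026) (n 1 4 (l 14227138) (l 448370370) (l 448537121) (l 14260930)) (l
  456894657)) (l 545474) (l 17410241)))) (n 4 5 (n 2 4 (l 447272129) (l 13978274) (n 1 4 (l
  448307874) (l 13965889) (l 446940834) (l 448405154)) (l 448353473)) (l 446947873) (l 446944833)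
  (n 2 4 (n 3 4 (l 14309569) (l 455384738) (l 545474) (l 17376449)) (l 13979330) (l 14013122) (l
  448387265))) (l 13967042))) (n 1 4 (l 13965858) (f 5 (n 4 5 (n 2 5 (l 447402145) (l 13982242) (n
  1 5 (l 448435778) (l 13966017) (l 446944802) (n 1 3 (l 13916706) (l 17052321) (l 443962914) (l
  531010))) (l 448483489)) (n 2 5 (l 13984290) (l 447467681) (l 448549025) (n 1 3 (l 13906625) (l
  16960193) (l 443964962) (l 531010))) (l 446910113) (n 2 5 (l 447499425) (l 13983298) (l
  14017090) (n 3 5 (l 14428353) (n 2 4 (l 460924097) (l 14395970) (n 1 5 (l 14358082) (l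
  448501314) (l 448406177) (l 14391874)) (l 460957889)) (l 549442) (l 17541313)))) (n 1 5 (l
  13965986) (n 3 4 (l 14292674) (n 2 5 (l 456402594) (n 4 5 (l 13982242) (l 455845057) (l
  456926401) (l 13983298)) (n 2 4 (l 14234274) (l 456548513) (l 14231745) (l 448370370)) (l
  448501314)) (n 2 4 (n 2 5 (l 555016353) (l 17344194) (l 17347234) (l 448501314)) (l 17441985) (l
  17344705) (l 448370370)) (l 17405634)) (n 3 4 (l 14295714) (n 2 4 (l 455384738) (n 2 5 (l
  456402594) (l 13981889) (l 456545473) (l 14267074)) (l 14231745) (l 448373410)) (n 2 4 (l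
  554999458) (l 17441985) (l 17344705) (l 448373410)) (l 17408674)) (l 13967042))) (f 5 (n 4 5 (n
  2 5 (l 447399105) (l 13982242) (n 1 5 (l 448438818) (l 13966017) (l 446944802) (l 448536098)) (l
  448480449)) (l 446940865) (l 446943905) (n 2 5 (n 3 5 (l 14436545) (l 459578914) (l 549442) (l
  17507521)) (l 13983298) (l 14017090) (l 448514241))) (n 1 5 (l 13965986) (n 3 5 (l 14426658) (n
  2 5 (l 459578914) (n 2 4 (l 460596770) (l 13977793) (l 460735681) (l 14398018)) (l 14362817) (l
  448504354)) (n 2 5 (l 559193634) (l 17573057) (l 17475777) (l 448504354)) (l 17539618)) (n 2 4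
  (l 447258274) (l 13977793) (n 3 4 (l 454368930) (l 14231745) (l 17344705) (l 17374882)) (l
  448339618)) (l 13967042))) (l 13966914))

/-- Three doubles (three spare edges). -/
def treeDDD : CTree :=
  f 3 (f 4 (f 5 (n 1 5 (n 3 5 (n 4 5 (n 1 3 (l 342283809) (l 10697377) (n 2 4 (l 354066849) (l
  11097250) (l 387626178) (l 388669857)) (l 343365153)) (l 10707489) (l 10704449) (n 1 4 (n 3 4 (l
  342537761) (l 10703265) (l 10700225) (n 2 3 (l 10936897) (l 10995874) (l 12077218) (l
  385472674))) (l 10702529) (l 10736321) (l 343529889))) (l 10707361) (l 10704321) (n 4 5 (n 1 3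
  (n 3 4 (l 342541729) (l 10696257) (l 10699297) (n 2 3 (l 11033121) (l 10999970) (l 12081314) (l
  385438882))) (l 10698433) (l 10732225) (l 343398945)) (l 10707489) (l 10704449) (n 1 3 (n 2 4 (l
  11165121) (l 11131042) (l 12212386) (l 389789858)) (l 10698433) (l 10732225) (l 343400001)))) (n
  3 5 (l 10705313) (n 1 3 (l 10696385) (n 2 5 (l 11277761) (l 11255970) (l 12337314) (n 3 4 (l
  10697249) (l 393394753) (n 1 4 (l 393757858) (l 393398721) (l 393496001) (l 10734017)) (l
  10698305))) (n 2 3 (l 10918593) (l 342210) (n 2 5 (l 11280801) (l 11252930) (l 12334274) (n 3 4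
  (l 342603297) (l 393492033) (l 393495073) (l 10732097))) (l 11999937)) (l 10730177)) (n 4 5 (l
  10705441) (n 2 3 (l 11035169) (l 11002018) (l 12083362) (n 1 4 (l 385631394) (l 385619521) (l
  385622561) (l 10734273))) (n 2 3 (l 11032129) (l 11002018) (l 12083362) (n 1 3 (l 10699425) (l
  385014337) (l 11999937) (l 343397953))) (l 10706497)) (l 10706369)) (n 3 5 (n 3 4 (n 1 4 (l
  342406817) (l 10701217) (n 4 5 (n 2 3 (l 10929346) (l 350920225) (l 383435970) (l 12010690)) (l
  343688609) (l 343591329) (l 10740289)) (l 343488161)) (l 343586369) (l 343589409) (n 1 4 (n 2 3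
  (l 10933442) (l 10995874) (l 12077218) (l 12014786)) (l 10702273) (l 10736065) (l 343521953)))
  (n 1 3 (l 10696385) (n 2 5 (l 11180481) (l 350402) (l 12337314) (l 12261825)) (n 4 5 (l
  343333409) (n 2 3 (l 349430305) (l 342210) (l 11983042) (l 384033313)) (n 2 3 (l 10934849) (l
  342210) (l 11983042) (l 12016193)) (l 10740289)) (l 10730177)) (n 3 4 (l 343587361) (n 2 5 (l
  11188801) (l 350402) (n 1 4 (l 10703265) (l 391597218) (n 2 3 (l 353017377) (l 10998978) (l
  11978946) (l 384376481)) (l 343524001)) (l 12270145)) (n 1 4 (l 10700225) (n 2 5 (l 11180609) (l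
  350402) (l 391631010) (l 12261953)) (n 2 4 (l 353621441) (l 346306) (l 387437762) (l 388224449))
  (l 10734017)) (l 343588417)) (l 10740161)) (n 3 5 (n 4 5 (n 1 3 (l 342283809) (l 10697377) (n 2
  3 (l 349428257) (l 342210) (l 11985090) (l 384031265)) (l 343365153)) (n 3 4 (l 343619105) (l
  343658913) (l 343655873) (n 1 4 (l 10700481) (l 10702273) (l 10736065) (l 10734273))) (l
  10738241) (n 1 4 (n 2 4 (l 11164065) (l 11132098) (l 12213442) (l 12133057)) (l 10702529) (l
  10736321) (l 343529889))) (n 1 3 (l 10696385) (n 2 3 (l 10935490) (l 10986177) (l 12067521) (l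
  12016834)) (n 4 5 (l 343333409) (n 2 4 (l 11066562) (l 355179937) (l 387691714) (l 12147906)) (l
  10738241) (l 343334465)) (l 10730177)) (l 10738113) (n 1 3 (n 2 3 (l 10920641) (l 11001026) (l
  12082370) (l 12001985)) (l 10698433) (l 10732225) (n 3 4 (l 343652897) (l 10730049) (n 2 4 (l
  11058370) (l 11091649) (l 387439810) (l 12139714)) (l 343653953))))) (n 1 5 (n 3 5 (n 1 3 (l
  10696354) (n 2 5 (l 11190434) (l 11212225) (n 3 4 (l 10697249) (l 391297601) (n 1 4 (l
  391660706) (l 391301569) (l 391398849) (l 10734017)) (l 10698305)) (l 12271778)) (n 2 3 (l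
  10918562) (l 342210) (n 2 5 (l 11187394) (l 11215265) (n 3 4 (l 342537761) (l 391394881) (l
  391397921) (l 10732097)) (l 12268738)) (l 11999906)) (l 10730146)) (l 10707361) (l 10704321) (n
  2 3 (l 344770) (l 10999970) (l 12081314) (n 1 3 (n 1 4 (n 3 4 (l 384341666) (l 12011682) (l
  10700225) (l 385423010)) (l 385553985) (l 385557025) (l 12001857)) (n 4 5 (n 1 4 (l 385565858)
  (l 385010338) (l 385107618) (l 10734242)) (l 10707489) (l 10704449) (l 385016385)) (l 11999906)
  (l 10731202)))) (l 334530) (n 3 5 (n 3 4 (n 1 3 (l 10696354) (l 10697249) (n 2 4 (l 11056322) (l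
  11089570) (l 387372226) (l 12137666)) (l 10730146)) (l 343586369) (l 343589409) (n 1 3 (l
  10696354) (l 10698305) (l 10732097) (l 10730146))) (n 2 3 (n 1 3 (l 10920610) (n 2 5 (l
  11180481) (l 350402) (l 12337314) (l 12261825)) (l 10729154) (l 344258)) (l 342722) (l 11983042)
  (n 4 5 (n 1 4 (l 10700450) (n 2 4 (l 11064514) (l 11117218) (l 12198562) (l 12145858)) (l
  343466401) (l 10734242)) (n 1 3 (l 12001954) (l 385114657) (l 10729154) (l 343367201)) (l
  12016193) (l 10740289))) (n 1 3 (n 2 3 (l 10920610) (l 10998978) (l 12080322) (l 12001954)) (l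
  10698402) (l 10732194) (n 4 5 (n 2 4 (l 11064514) (l 11097537) (l 387628226) (l 12145858)) (l
  343400993) (l 343397953) (l 10740289))) (l 10740161)) (n 3 5 (n 1 3 (l 10696354) (n 2 5 (l
  352450) (l 11246017) (l 12327361) (l 12271778)) (n 2 3 (l 10919618) (l 342210) (l 11985090) (l
  12000962)) (l 10730146)) (n 2 3 (l 10935490) (l 342722) (n 1 3 (l 11969218) (n 3 4 (l 10697249)
  (l 343651905) (l 343654945) (l 10698305)) (l 10729154) (l 12066498)) (l 12016834)) (l 10738113)
  (n 2 3 (l 344770) (l 11001026) (l 12082370) (n 1 3 (n 3 4 (l 343652897) (l 10696257) (l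
  10699297) (l 343653953)) (l 12034754) (l 12000962) (l 10731202)))))) (f 5 (n 1 4 (n 3 4 (n 1 3
  (l 10696226) (n 2 4 (l 11059362) (l 11081153) (n 3 5 (l 10697377) (l 387103425) (n 1 5 (l
  387470498) (l 387111361) (l 387208641) (l 10738113)) (l 10698433)) (l 12140706)) (n 2 3 (l
  10918434) (l 342210) (n 2 4 (l 11056322) (l 11084193) (n 3 5 (l 342406817) (l 387200705) (l
  387203745) (l 10732225)) (l 12137666)) (l 11999778)) (l 10730018)) (l 10703265) (l 10700225) (n
  2 3 (l 344642) (l 10995874) (l 12077218) (n 1 3 (n 1 5 (n 3 5 (l 384472610) (l 12015778) (l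
  10704321) (l 385553954)) (l 385423041) (l 385426081) (l 12001985)) (n 4 5 (n 1 5 (l 385438882)
  (l 385014306) (l 385111586) (l 10738210)) (l 10700481) (l 10703521) (l 385012417)) (l 11999778)
  (l 10731074)))) (l 334402) (n 3 4 (n 3 5 (n 1 3 (l 10696226) (l 10697377) (n 2 5 (l 11187394) (l
  11220514) (l 391562434) (l 12268738)) (l 10730018)) (l 343455425) (l 343458465) (n 1 3 (l
  10696226) (l 10698433) (l 10732225) (l 10730018))) (n 2 3 (n 1 3 (l 10920482) (n 2 4 (l
  11049409) (l 346306) (l 12206242) (l 12130753)) (l 10729026) (l 344258)) (l 342594) (l 11978946)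
  (n 4 5 (n 1 5 (l 10704418) (n 2 5 (l 11191490) (l 11248162) (l 12329506) (l 12272834)) (l
  343593377) (l 10738210)) (l 12012225) (n 1 3 (l 12001826) (l 385110689) (l 10729026) (l
  343363233)) (l 10736321))) (n 1 3 (n 2 3 (l 10920482) (l 10994882) (l 12076226) (l 12001826)) (l
  10698274) (l 10732066) (n 4 5 (n 2 5 (l 11191490) (l 11224513) (l 391691458) (l 12272834)) (l
  343393985) (l 343397025) (l 10736321))) (l 10736065)) (n 3 4 (n 1 3 (l 10696226) (n 2 4 (l
  348354) (l 11114945) (l 12196289) (l 12140706)) (n 2 3 (l 10919490) (l 342210) (l 11980994) (l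
  12000834)) (l 10730018)) (n 2 3 (l 10931394) (l 342594) (n 1 3 (l 11969090) (n 3 5 (l 10697377)
  (l 343520961) (l 343524001) (l 10698433)) (l 10729026) (l 12066370)) (l 12012738)) (l 10734017)
  (n 2 3 (l 344642) (l 10996930) (l 12078274) (n 1 3 (n 3 5 (l 343521953) (l 10696385) (l
  10699425) (l 343523009)) (l 12034626) (l 12000834) (l 10731074))))) (n 1 4 (n 3 4 (n 1 3 (l
  10696226) (n 2 4 (l 11059362) (l 11081153) (n 1 5 (l 387454626) (l 334530) (n 3 5 (l 387372226)
  (l 387211681) (l 10698402) (l 12108482)) (l 12100290)) (l 12140706)) (n 2 3 (l 10918434) (l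
  342210) (n 2 4 (l 11056322) (l 11084193) (n 1 5 (l 387357346) (l 334530) (l 383296162) (l
  12100290)) (l 12137666)) (l 11999778)) (l 10730018)) (l 10703265) (l 10700225) (n 2 3 (l 344642)
  (l 10995874) (l 12077218) (n 1 5 (l 385423010) (l 334530) (n 1 3 (l 12001954) (n 4 5 (l
  385111586) (l 10740258) (l 385471682) (n 2 5 (l 352834) (l 350402) (l 394902690) (l 12261922)))
  (l 11999778) (l 10731074)) (n 4 5 (l 10738210) (l 12044994) (n 2 5 (l 352450) (l 350786) (l
  12327458) (l 12273826)) (l 385473730))))) (l 334402) (n 4 5 (n 1 5 (l 10704418) (l 334530) (n 3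
  4 (n 2 3 (l 10929346) (l 10962594) (l 383308994) (l 12010690)) (l 343593377) (l 343590337) (l
  10736065)) (l 10738210)) (l 10733250) (l 10736290) (n 1 5 (n 2 4 (l 348866) (l 346306) (l
  12212386) (l 12130978)) (l 334530) (n 2 4 (l 348866) (l 346306) (n 3 5 (n 3 4 (l 387372226) (l
  343690657) (n 1 3 (l 10696354) (l 10698274) (l 12105922) (l 10730146)) (l 12204706)) (l
  343563681) (l 12212673) (l 10740161)) (l 12179650)) (l 10739266))) (n 4 5 (l 10734242) (n 1 5 (n
  2 4 (l 348354) (l 346818) (l 12196514) (l 12146850)) (l 10706466) (l 10740258) (n 2 4 (l 348354)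
  (l 11116226) (l 12197570) (l 12147906))) (n 2 5 (l 11193538) (l 350786) (n 1 5 (l 12231234) (l
  334530) (l 10737218) (l 12328514)) (l 12274882)) (l 10735298))))) (f 4 (f 5 (n 1 3 (n 3 4 (n 1 4
  (l 10700194) (n 2 3 (l 10932386) (l 10950209) (n 4 5 (l 10701473) (l 382913217) (n 1 5 (l
  383407266) (l 382917185) (l 383014465) (l 10738241)) (l 10702529)) (l 12013730)) (n 2 4 (l
  11049378) (l 346306) (n 2 3 (l 10929346) (l 10953249) (n 4 5 (l 342279841) (l 383010497) (l
  383013537) (l 10736321)) (l 12010690)) (l 12130722)) (l 10733986)) (l 10696257) (l 10699297) (n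
  2 4 (l 348610) (l 11122850) (l 12204194) (n 1 4 (n 1 5 (n 3 5 (l 389502114) (l 10696385) (l
  10699425) (l 389535906)) (l 389486273) (l 389489313) (l 12133057)) (n 3 5 (n 1 5 (l 389502114)
  (l 389208482) (l 389305762) (l 10738082)) (l 10696385) (l 10699425) (l 389202625)) (l 12130722)
  (l 10735042)))) (l 334274) (n 3 4 (n 4 5 (n 1 4 (l 10700194) (l 10701473) (n 2 5 (l 11191490) (l
  11224482) (l 391689410) (l 12272834)) (l 10733986)) (l 343328449) (l 343331489) (n 1 4 (l
  10700194) (l 10702529) (l 10736321) (l 10733986))) (n 1 4 (n 2 4 (l 11051426) (l 11121858) (l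
  12203202) (l 12132770)) (l 10702242) (l 10736034) (n 3 5 (n 2 5 (l 11187394) (l 11220545) (l
  391564482) (l 12268738)) (l 343520961) (l 343524001) (l 10732225))) (n 2 4 (n 1 4 (l 11051426)
  (n 2 3 (l 10918465) (l 342210) (l 12079266) (l 11999809)) (l 10732994) (l 348354)) (l 346562) (l
  12105922) (n 3 5 (n 1 5 (l 10704290) (n 2 5 (l 11187394) (l 11248034) (l 12329378) (l 12268738))
  (l 343589409) (l 10738082)) (l 12139201) (n 1 4 (l 12132770) (l 389300897) (l 10732994) (l
  343490209)) (l 10732225))) (l 10732097)) (n 3 4 (n 1 4 (l 10700194) (n 2 3 (l 344258) (l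
  10984001) (l 12065345) (l 12013730)) (n 2 4 (l 11050434) (l 346306) (l 12107970) (l 12131778))
  (l 10733986)) (l 10730049) (n 2 4 (l 11058370) (l 346562) (n 1 4 (l 12100034) (n 4 5 (l
  10701473) (l 343393985) (l 343397025) (l 10702529)) (l 10732994) (l 12197314)) (l 12139714)) (n
  2 4 (l 348610) (l 11123906) (l 12205250) (n 1 4 (n 4 5 (l 343394977) (l 10700481) (l 10703521)
  (l 343396033)) (l 12165570) (l 12131778) (l 10735042))))) (n 1 3 (n 3 4 (n 1 4 (l 10700194) (n 2
  3 (l 10932386) (l 10950209) (n 1 5 (l 383391394) (l 334530) (n 4 5 (l 383308994) (l 383017505)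
  (l 10702498) (l 11981506)) (l 11969218)) (l 12013730)) (n 2 4 (l 11049378) (l 346306) (n 2 3 (l
  10929346) (l 10953249) (n 1 5 (l 383294114) (l 334530) (l 387359394) (l 11969218)) (l 12010690))
  (l 12130722)) (l 10733986)) (l 10696257) (l 10699297) (n 2 4 (l 348610) (l 11122850) (l
  12204194) (n 1 5 (l 389486242) (l 334530) (n 1 4 (l 12133026) (n 3 5 (l 389305762) (l 10740130)
  (l 389534914) (n 2 5 (l 352706) (l 350402) (l 12335266) (l 12261794))) (l 12130722) (l
  10735042)) (n 3 5 (l 10738082) (l 12171970) (n 2 5 (l 352450) (l 350658) (l 12327330) (l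
  12269730)) (l 389536962))))) (l 334274) (n 3 5 (n 1 5 (l 10704290) (l 334530) (n 3 4 (n 2 4 (l
  11056322) (l 11089570) (l 387372226) (l 12137666)) (l 343586369) (l 343589409) (l 10732097)) (l
  10738082)) (l 10729154) (l 10732194) (n 1 5 (n 2 3 (l 344770) (l 342210) (l 12081314) (l
  11999906)) (l 334530) (n 2 3 (l 344770) (l 342210) (n 4 5 (n 3 4 (l 383308994) (n 1 4 (l
  10700450) (l 10702242) (l 11978946) (l 10734242)) (l 343686689) (l 12077730)) (l 343432737) (l
  12081729) (l 10740289)) (l 12048578)) (l 10739138))) (n 3 5 (l 10730146) (n 1 5 (n 2 3 (l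
  344258) (l 342722) (l 12065442) (l 12015778)) (l 10706338) (l 10740130) (n 2 3 (l 344258) (l
  10985154) (l 12066498) (l 12016834))) (n 2 5 (l 11189442) (l 350658) (n 1 5 (l 12231106) (l
  334530) (l 10737090) (l 12328386)) (l 12270786)) (l 10731202)))) (f 5 (n 1 3 (n 3 5 (n 1 5 (l
  10704290) (n 2 3 (l 10936482) (l 10950337) (n 1 4 (l 383522338) (l 334402) (n 4 5 (l 383435970)
  (l 10706466) (l 383013537) (l 11985474)) (l 11969090)) (l 12017826)) (n 2 5 (l 11180450) (l
  350402) (n 2 3 (l 10933442) (l 10953377) (n 1 4 (l 383425058) (l 334402) (l 391553570) (l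
  11969090)) (l 12014786)) (l 12261794)) (l 10738082)) (l 10696385) (l 10699425) (n 2 5 (l 352706)
  (l 11253922) (l 12335266) (n 1 4 (l 393680418) (l 334402) (n 1 5 (l 12263970) (n 3 4 (l
  393495970) (l 10736034) (l 393725122) (n 2 4 (l 348610) (l 346306) (l 12204194) (l 12130722)))
  (l 12261794) (l 10739138)) (n 3 4 (l 10733986) (l 12302914) (n 2 4 (l 348354) (l 346562) (l
  12196258) (l 12138658)) (l 393727170))))) (l 334274) (n 3 4 (n 1 4 (l 10700194) (l 334402) (n 3
  5 (n 2 5 (l 11187394) (l 11220514) (l 391562434) (l 12268738)) (l 343455425) (l 343458465) (l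
  10732225)) (l 10733986)) (l 10729026) (l 10732066) (n 1 4 (n 2 3 (l 344642) (l 342210) (l
  12077218) (l 11999778)) (l 334402) (n 2 3 (l 344642) (l 342210) (n 4 5 (n 3 5 (l 383435970) (n 1
  5 (l 10704418) (l 10706338) (l 11983042) (l 10738210)) (l 343555745) (l 12081698)) (l 12077761)
  (l 343428769) (l 10736321)) (l 12044482)) (l 10735042))) (n 3 4 (l 10730018) (n 1 4 (n 2 3 (l
  344258) (l 342594) (l 12065314) (l 12011682)) (l 10702242) (l 10736034) (n 2 3 (l 344258) (l
  10985026) (l 12066370) (l 12012738))) (n 2 4 (l 11058370) (l 346562) (n 1 4 (l 12100034) (l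
  334402) (l 10732994) (l 12197314)) (l 12139714)) (l 10731074))) (n 1 3 (n 1 4 (n 3 5 (l
  10696354) (n 2 5 (l 11285666) (l 360093218) (l 394696226) (n 3 4 (l 10700194) (l 393660578) (l
  393757858) (l 12304962))) (n 2 5 (l 11188386) (l 350658) (l 391583266) (l 12269730)) (n 2 5 (l
  352706) (l 11253922) (l 12335266) (l 393680418))) (l 334402) (n 2 4 (l 11049378) (l 346306) (n 3
  4 (l 10696226) (l 10736034) (l 10732994) (l 12204194)) (l 12130722)) (n 2 4 (l 348354) (l
  11114914) (l 12196258) (n 3 4 (l 10733986) (n 2 3 (l 10931394) (l 342594) (l 11969090) (l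
  12012738)) (l 12138658) (l 10735042)))) (l 334274) (n 3 4 (n 1 4 (l 10700194) (l 334402) (n 2 3
  (l 10929346) (l 342210) (n 4 5 (l 343328418) (l 10733250) (l 10736290) (l 11981506)) (l
  12010690)) (l 10733986)) (l 10729026) (l 10732066) (n 3 5 (n 2 4 (l 348610) (l 11123362) (l
  12204706) (l 12171458)) (l 10729154) (l 10732194) (n 2 4 (l 348610) (l 11124418) (l 12205762) (l
  12171458)))) (n 3 4 (l 10730018) (n 1 4 (n 2 3 (l 344258) (l 342594) (l 12065314) (l 12011682))
  (l 10702242) (l 10736034) (n 2 3 (l 344258) (l 10985026) (l 12066370) (l 12012738))) (n 2 4 (l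
  11058370) (l 346562) (n 1 4 (l 12100034) (l 334402) (l 10732994) (l 12197314)) (l 12139714)) (l
  10731074)))))

/-- Five singles (two spare edges). -/
def treeSSSSS : CTree :=
  f 5 (n 1 5 (n 2 5 (n 3 5 (n 1 3 (n 0 2 (n 1 4 (n 0 3 (n 2 4 (n 4 5 (f 6 (n 1 6 (l 18972186401)
  (l 584357697) (l 584360737) (l 18129729)) (n 1 6 (l 584357666) (l 18126658) (l 18129698) (l
  566082))) (l 593929377) (l 693544097) (l 21701793)) (l 681227425) (l 581612705) (l 21312673)) (l
  576366081) (l 576365986) (l 17999362)) (l 677033249) (l 577418529) (l 21181729)) (l 584750465)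
  (l 584750370) (l 18257282)) (l 587376289) (l 584263329) (l 18356897)) (l 584787105) (l
  587900065) (l 18372769)) (l 584374433) (l 584471713) (l 18264769)) (l 584357569) (l 584360609)
  (n 3 5 (l 18276545) (n 4 5 (l 596026529) (n 0 2 (l 584816929) (l 18585985) (l 18585890) (l
  18593154)) (l 680129) (l 695641249)) (n 2 5 (l 587900065) (l 584375489) (n 1 4 (l 575980193) (l
  664257) (l 18035361) (n 0 2 (l 18371905) (l 661889) (l 661794) (l 18371938))) (l 18264769)) (l
  18373825))) (n 2 5 (n 3 5 (n 1 5 (l 584357538) (l 584376481) (l 584373441) (l 18276545)) (l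
  584787105) (l 587900065) (l 574146)) (l 18261698) (l 18264738) (n 3 5 (n 2 4 (l 570050) (l
  21280418) (l 18167458) (l 667330)) (l 584820897) (n 1 5 (l 584357538) (l 18374817) (l 18371777)
  (n 4 5 (l 18622625) (n 1 3 (l 18561185) (n 0 3 (l 18586049) (l 18590209) (l 580034) (l
  18586082)) (l 18259650) (l 18562241)) (l 680129) (l 21735585))) (l 574146)))

/-- Six matching edges: a proper cycle of length six. -/
def treeBase : CTree :=
  f 1 (f 4 (f 5 (f 2 (f 3 (n 1 2 (n 1 3 (n 2 4 (n 3 5 (l 718448161) (l 25597217) (l 22484257) (l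
  800929)) (l 21271969) (l 18159009) (l 665761)) (n 1 4 (n 2 3 (l 18004257) (l 17999297) (l
  409761) (l 534689)) (l 660929) (l 563649) (l 661793)) (n 2 3 (n 1 4 (l 18101537) (l 663969) (l
  18032033) (l 661793)) (l 309441) (l 406721) (l 534689)) (l 530721)) (n 1 3 (n 1 4 (n 2 3 (l
  18000289) (l 536737) (l 18003265) (l 407713)) (l 660801) (l 563521) (l 661921)) (l 529729) (l
  432449) (n 1 4 (l 565697) (l 660801) (l 563521) (l 662977))) (n 2 4 (n 2 3 (n 1 3 (l 18127265)
  (l 18137249) (l 18134209) (l 311489)) (l 533697) (l 436417) (l 569793)) (l 664769) (l 567489) (n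
  2 3 (l 666017) (l 533697) (l 436417) (l 667073))) (n 1 3 (l 434497) (n 1 4 (l 565569) (l 660929)
  (l 563649) (l 662849)) (n 2 3 (l 438465) (l 309441) (l 406721) (l 535745)) (l 531777))) (n 1 3
  (n 1 2 (n 1 4 (n 2 3 (l 17999266) (l 173506) (l 176546) (l 12738)) (l 660898) (l 563618) (l
  661793)) (l 398754) (l 301474) (n 1 4 (l 565569) (l 660898) (l 563618) (l 662849))) (n 2 3 (n 1
  2 (l 300482) (l 174498) (l 271778) (l 14726)) (n 1 4 (l 562626) (l 21151009) (l 18038049) (n 1 5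
  (l 693698) (l 25345313) (l 22232353) (l 794177))) (l 409761) (l 12738)) (n 2 3 (n 1 2 (l 303522)
  (l 174498) (l 271778) (l 400802)) (l 309441) (l 406721) (l 12738)) (l 8642))) (f 3 (n 1 2 (n 1 3
  (n 1 4 (n 2 3 (l 18003234) (l 180514) (l 177474) (l 16706)) (l 660770) (l 563490) (l 661921)) (l
  529698) (l 432418) (n 1 4 (l 565697) (l 660770) (l 563490) (l 662977))) (n 2 3 (n 1 3 (l 431426)
  (l 178466) (l 275746) (l 10758)) (l 536737) (n 1 4 (l 562498) (l 21147041) (l 18034081) (n 1 5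
  (l 693570) (l 25341345) (l 22228385) (l 794177))) (l 16706)) (n 2 3 (n 1 3 (l 434466) (l 178466)
  (l 275746) (l 531746)) (l 533697) (l 436417) (l 16706)) (l 8514)) (n 1 2 (n 1 4 (n 1 3 (n 2 4 (l
  18126242) (l 184610) (l 181570) (l 20802)) (l 562626) (l 565666) (l 8642)) (l 660770) (l 563490)
  (n 1 5 (l 696897) (l 791842) (l 694562) (l 794177))) (n 1 3 (n 2 3 (l 174498) (l 180514) (l
  177474) (l 175554)) (l 529731) (l 432451) (l 8642)) (n 2 4 (n 1 4 (l 565538) (l 182562) (l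
  279842) (l 662818)) (l 664769) (l 567489) (l 20802)) (l 8514)))) (f 2 (f 3 (n 1 5 (n 1 2 (n 1 3
  (n 2 4 (l 18126498) (l 21271969) (l 18159009) (l 665761)) (l 530082) (l 432802) (l 530721)) (l
  399010) (l 301730) (n 1 3 (l 434497) (l 530082) (l 432802) (l 531777))) (n 2 5 (n 1 2 (l 300738)
  (l 174754) (l 272034) (l 22918)) (n 1 3 (l 431810) (l 16964897) (l 13851937) (n 1 4 (l 562882)
  (l 21159201) (l 18046241) (l 662977))) (l 417953) (l 12994)) (n 2 5 (n 1 2 (l 303778) (l 174754)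
  (l 272034) (l 401058)) (l 317633) (l 414913) (l 12994)) (l 8898)) (n 1 3 (n 1 2 (n 1 5 (n 2 3 (l
  9868962) (l 173506) (l 176546) (l 12738)) (l 300738) (l 303778) (l 8898)) (l 398754) (l 301474)
  (n 1 4 (l 565569) (l 660898) (l 563618) (l 662849))) (n 1 5 (n 3 5 (l 178850) (l 188834) (l
  185794) (l 179906)) (l 792003) (l 694723) (l 8898)) (n 2 3 (n 1 2 (l 303522) (l 174498) (l
  271778) (l 400802)) (l 309441) (l 406721) (l 12738)) (l 8642))) (f 3 (n 1 2 (n 1 3 (n 1 5 (n 2 3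
  (l 13932194) (l 180514) (l 177474) (l 16706)) (l 431810) (l 434850) (l 8898)) (l 529698) (l
  432418) (n 1 4 (l 565697) (l 660770) (l 563490) (l 662977))) (n 1 5 (n 2 5 (l 174754) (l 188706)
  (l 185666) (l 175810)) (l 791875) (l 694595) (l 8898)) (n 2 3 (n 1 3 (l 434466) (l 178466) (l
  275746) (l 531746)) (l 533697) (l 436417) (l 16706)) (l 8514)) (n 1 2 (n 2 5 (n 2 4 (n 1 3 (l
  18126242) (l 22320579) (l 22323619) (l 8642)) (l 665250) (l 567970) (l 20802)) (l 173762) (l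
  176802) (n 2 3 (l 797091) (l 173506) (l 176546) (l 798147))) (n 1 3 (n 2 3 (l 174498) (l 180514)
  (l 177474) (l 175554)) (l 529731) (l 432451) (l 8642)) (n 2 4 (n 1 4 (l 565538) (l 182562) (l
  279842) (l 662818)) (l 664769) (l 567489) (l 20802)) (l 8514))))) (f 5 (f 2 (f 3 (n 1 4 (n 1 2
  (n 1 3 (n 2 4 (l 13805090) (l 173634) (l 176674) (l 12866)) (l 529954) (l 432674) (l 530721)) (l
  398882) (l 301602) (n 1 3 (l 434497) (l 529954) (l 432674) (l 531777))) (n 2 4 (n 1 2 (l 300610)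
  (l 174626) (l 271906) (l 18822)) (n 1 3 (l 431682) (l 16960801) (l 13847841) (n 1 5 (l 693826)
  (l 25349409) (l 22236449) (l 794049))) (l 413857) (l 12866)) (n 2 4 (n 1 2 (l 303650) (l 174626)
  (l 271906) (l 400930)) (l 313537) (l 410817) (l 12866)) (l 8770)) (n 1 3 (n 1 2 (n 1 4 (n 2 3 (l
  9868834) (l 173506) (l 176546) (l 12738)) (l 300610) (l 303650) (l 8770)) (l 398754) (l 301474)
  (n 1 5 (l 696641) (l 791970) (l 694690) (l 793921))) (n 1 4 (n 3 4 (l 178722) (l 184738) (l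
  181698) (l 179778)) (l 660931) (l 563651) (l 8770)) (n 2 3 (n 1 2 (l 303522) (l 174498) (l
  271778) (l 400802)) (l 309441) (l 406721) (l 12738)) (l 8642))) (f 3 (n 1 2 (n 1 3 (n 1 4 (n 2 3
  (l 13932066) (l 180514) (l 177474) (l 16706)) (l 431682) (l 434722) (l 8770)) (l 529698) (l
  432418) (n 1 5 (l 696769) (l 791842) (l 694562) (l 794049))) (n 1 4 (n 2 4 (l 174626) (l 184610)
  (l 181570) (l 175682)) (l 660803) (l 563523) (l 8770)) (n 2 3 (n 1 3 (l 434466) (l 178466) (l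
  275746) (l 531746)) (l 533697) (l 436417) (l 16706)) (l 8514)) (n 1 2 (n 2 3 (n 2 5 (n 1 3 (l
  22320546) (l 178466) (l 275746) (l 8642)) (l 796066) (l 698786) (l 24898)) (l 173506) (l 176546)
  (n 2 4 (l 569795) (l 173634) (l 176674) (l 667075))) (n 1 3 (n 2 3 (l 174498) (l 180514) (l
  177474) (l 175554)) (l 529731) (l 432451) (l 8642)) (n 2 5 (n 1 5 (l 696610) (l 186658) (l
  283938) (l 793890)) (l 795841) (l 698561) (l 24898)) (l 8514)))) (f 3 (f 2 (n 1 4 (n 1 2 (n 1 5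
  (n 2 4 (l 10000034) (l 173634) (l 176674) (l 12866)) (l 300738) (l 303778) (l 8898)) (l 398882)
  (l 301602) (n 1 3 (l 434497) (l 529954) (l 432674) (l 531777))) (n 1 5 (n 4 5 (l 182946) (l
  188962) (l 185922) (l 184002)) (l 792131) (l 694851) (l 8898)) (n 2 4 (n 1 2 (l 303650) (l
  174626) (l 271906) (l 400930)) (l 313537) (l 410817) (l 12866)) (l 8770)) (n 1 2 (n 2 5 (n 2 3
  (n 1 4 (l 13932066) (l 22320707) (l 22323747) (l 8770)) (l 534178) (l 436898) (l 16706)) (l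
  173762) (l 176802) (n 2 4 (l 797219) (l 173634) (l 176674) (l 798275))) (n 1 4 (n 2 4 (l 174626)
  (l 184610) (l 181570) (l 175682)) (l 660803) (l 563523) (l 8770)) (n 2 3 (n 1 3 (l 434466) (l
  178466) (l 275746) (l 531746)) (l 533697) (l 436417) (l 16706)) (l 8514))) (f 2 (n 1 3 (n 3 5 (n
  2 3 (n 1 4 (l 9868834) (l 22451779) (l 22454819) (l 8770)) (l 309922) (l 407202) (l 12738)) (l
  177858) (l 180898) (n 3 4 (l 801315) (l 177730) (l 180770) (l 802371))) (n 1 4 (n 3 4 (l 178722)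
  (l 184738) (l 181698) (l 179778)) (l 660931) (l 563651) (l 8770)) (n 2 3 (n 1 2 (l 303522) (l
  174498) (l 271778) (l 400802)) (l 309441) (l 406721) (l 12738)) (l 8642)) (n 1 2 (n 2 3 (n 2 4
  (n 1 3 (l 5678626) (l 178466) (l 275746) (l 8642)) (l 173634) (l 176674) (l 666019)) (l 173506)
  (l 176546) (n 2 4 (l 569795) (l 173634) (l 176674) (l 667075))) (n 1 3 (n 2 3 (l 174498) (l
  180514) (l 177474) (l 175554)) (l 529731) (l 432451) (l 8642)) (n 1 3 (n 2 3 (l 271778) (l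
  180514) (l 177474) (l 16710)) (l 532771) (n 2 4 (l 271906) (l 21274019) (l 18161059) (n 2 5 (l
  272034) (l 25468323) (l 22355363) (l 798275))) (l 8642)) (l 8514)))))) (f 4 (f 5 (f 3 (f 2 (n 1
  2 (n 2 3 (n 2 4 (n 1 3 (l 18134178) (l 311458) (l 308418) (l 16578)) (l 664738) (l 567458) (l
  666017)) (l 533666) (l 436386) (n 2 4 (l 569793) (l 664738) (l 567458) (l 667073))) (n 1 3 (n 2
  3 (l 438434) (l 309410) (l 406690) (l 535714)) (l 529729) (l 432449) (l 16578)) (n 1 3 (n 2 3 (l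
  435394) (l 309410) (l 406690) (l 16710)) (l 532769) (n 2 4 (l 566466) (l 21274017) (l 18161057)
  (n 2 5 (l 697538) (l 25468321) (l 22355361) (l 798273))) (l 16578)) (l 12482)) (n 1 3 (n 3 5 (n
  2 3 (n 1 4 (l 18003234) (l 22451777) (l 22454817) (l 20674)) (l 704802) (l 701762) (l 16706)) (l
  799906) (l 702626) (n 3 4 (l 801313) (l 668834) (l 571554) (l 802369))) (n 1 4 (n 3 4 (l 573602)
  (l 444578) (l 541858) (l 670882)) (l 660929) (l 563649) (l 20674)) (n 2 3 (n 1 2 (l 432418) (l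
  438434) (l 435394) (l 433474)) (l 309443) (l 406723) (l 16706)) (l 16578))) (f 2 (n 1 2 (n 2 5
  (n 2 3 (n 1 4 (l 17999266) (l 22320705) (l 22323745) (l 20674)) (l 697794) (l 700834) (l 12738))
  (l 795810) (l 698530) (n 2 4 (l 797217) (l 664738) (l 567458) (l 798273))) (n 1 4 (n 2 4 (l
  569506) (l 313506) (l 410786) (l 666786)) (l 660801) (l 563521) (l 20674)) (n 2 3 (n 1 3 (l
  301474) (l 311458) (l 308418) (l 302530)) (l 533699) (l 436419) (l 12738)) (l 12482)) (n 1 4 (n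
  1 2 (n 1 5 (n 2 4 (l 22201634) (l 664738) (l 567458) (l 20802)) (l 791842) (l 694562) (l 24770))
  (l 562498) (l 565538) (n 1 3 (l 434499) (l 562626) (l 565666) (l 531779))) (n 1 5 (n 4 5 (l
  708770) (l 579746) (l 677026) (l 806050)) (l 792129) (l 694849) (l 24770)) (n 2 4 (n 1 2 (l
  563490) (l 569506) (l 566466) (l 564546)) (l 313539) (l 410819) (l 20802)) (l 20674)))) (f 2 (f
  3 (n 1 2 (n 2 3 (n 2 5 (n 1 3 (l 13805218) (l 311458) (l 308418) (l 16578)) (l 435906) (l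
  438946) (l 12994)) (l 533666) (l 436386) (n 2 4 (l 569793) (l 664738) (l 567458) (l 667073))) (n
  1 3 (n 2 3 (l 438434) (l 309410) (l 406690) (l 535714)) (l 529729) (l 432449) (l 16578)) (n 2 5
  (n 1 5 (l 301730) (l 319650) (l 316610) (l 302786)) (l 795843) (l 698563) (l 12994)) (l 12482))
  (n 1 2 (n 1 3 (n 1 4 (n 2 3 (l 17999266) (l 309410) (l 406690) (l 12738)) (l 660898) (l 563618)
  (l 20674)) (l 300482) (l 303522) (n 1 5 (l 696771) (l 300738) (l 303778) (l 794051))) (n 1 4 (n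
  2 4 (l 569506) (l 313506) (l 410786) (l 666786)) (l 660801) (l 563521) (l 20674)) (n 2 3 (n 1 3
  (l 301474) (l 311458) (l 308418) (l 302530)) (l 533699) (l 436419) (l 12738)) (l 12482))) (f 3
  (n 1 3 (n 1 2 (n 1 4 (n 2 3 (l 18003234) (l 533666) (l 436386) (l 16706)) (l 660770) (l 563490)
  (l 20674)) (l 431426) (l 434466) (n 1 5 (l 696643) (l 431810) (l 434850) (l 793923))) (n 1 4 (n
  3 4 (l 573602) (l 444578) (l 541858) (l 670882)) (l 660929) (l 563649) (l 20674)) (n 2 3 (n 1 2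
  (l 432418) (l 438434) (l 435394) (l 433474)) (l 309443) (l 406723) (l 16706)) (l 16578)) (n 1 4
  (n 1 2 (n 1 3 (n 2 4 (l 18126242) (l 664738) (l 567458) (l 20802)) (l 562626) (l 565666) (l
  530723)) (l 562498) (l 565538) (n 1 3 (l 434499) (l 562626) (l 565666) (l 531779))) (n 2 4 (n 1
  2 (l 660770) (l 569506) (l 566466) (l 18822)) (n 1 3 (l 660898) (l 16960803) (l 13847843) (n 1 5
  (l 661154) (l 25349411) (l 22236451) (l 794051))) (l 413859) (l 20802)) (n 2 4 (n 1 2 (l 563490)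
  (l 569506) (l 566466) (l 564546)) (l 313539) (l 410819) (l 20802)) (l 20674))))) (f 3 (f 2 (f 5
  (n 1 2 (n 2 5 (n 2 4 (n 1 3 (l 13805090) (l 22320577) (l 22323617) (l 16578)) (l 697922) (l
  700962) (l 12866)) (l 795810) (l 698530) (n 2 3 (l 797089) (l 533666) (l 436386) (l 798145))) (n
  1 3 (n 2 3 (l 438434) (l 309410) (l 406690) (l 535714)) (l 529729) (l 432449) (l 16578)) (n 2 4
  (n 1 4 (l 301602) (l 315554) (l 312514) (l 302658)) (l 664771) (l 567491) (l 12866)) (l 12482))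
  (n 1 2 (n 1 4 (n 1 3 (n 2 4 (l 13805090) (l 313506) (l 410786) (l 12866)) (l 529954) (l 432674)
  (l 16578)) (l 300610) (l 303650) (n 1 5 (l 696899) (l 300738) (l 303778) (l 794179))) (n 1 3 (n
  2 3 (l 438434) (l 309410) (l 406690) (l 535714)) (l 529729) (l 432449) (l 16578)) (n 2 4 (n 1 4
  (l 301602) (l 315554) (l 312514) (l 302658)) (l 664771) (l 567491) (l 12866)) (l 12482))) (f 5
  (n 1 3 (n 1 2 (n 1 5 (n 2 3 (l 22197538) (l 533666) (l 436386) (l 16706)) (l 791842) (l 694562)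
  (l 24770)) (l 431426) (l 434466) (n 1 4 (l 565571) (l 431682) (l 434722) (l 662851))) (n 1 5 (n
  3 5 (l 704674) (l 448674) (l 545954) (l 801954)) (l 792001) (l 694721) (l 24770)) (n 2 3 (n 1 2
  (l 432418) (l 438434) (l 435394) (l 433474)) (l 309443) (l 406723) (l 16706)) (l 16578)) (n 1 3
  (n 1 2 (n 1 4 (n 2 3 (l 13932066) (l 533666) (l 436386) (l 16706)) (l 431682) (l 434722) (l
  661795)) (l 431426) (l 434466) (n 1 4 (l 565571) (l 431682) (l 434722) (l 662851))) (n 2 3 (n 1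
  2 (l 529698) (l 438434) (l 435394) (l 14726)) (n 1 4 (l 529954) (l 21151011) (l 18038051) (n 1 5
  (l 530082) (l 25345315) (l 22232355) (l 794179))) (l 409763) (l 16706)) (n 2 3 (n 1 2 (l 432418)
  (l 438434) (l 435394) (l 433474)) (l 309443) (l 406723) (l 16706)) (l 16578)))) (f 5 (f 2 (n 1 2
  (n 1 3 (n 1 5 (n 2 3 (l 22193570) (l 309410) (l 406690) (l 12738)) (l 791970) (l 694690) (l
  24770)) (l 300482) (l 303522) (n 1 4 (l 565699) (l 300610) (l 303650) (l 662979))) (n 1 5 (n 2 5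
  (l 700578) (l 317602) (l 414882) (l 797858)) (l 791873) (l 694593) (l 24770)) (n 2 3 (n 1 3 (l
  301474) (l 311458) (l 308418) (l 302530)) (l 533699) (l 436419) (l 12738)) (l 12482)) (n 1 5 (n
  1 2 (n 1 3 (n 2 4 (l 22193698) (l 21271971) (l 18159011) (l 665763)) (l 693698) (l 696738) (l
  530723)) (l 693570) (l 696610) (n 1 3 (l 434499) (l 693698) (l 696738) (l 531779))) (n 2 5 (n 1
  2 (l 791842) (l 700578) (l 697538) (l 22918)) (n 1 3 (l 791970) (l 16964899) (l 13851939) (n 1 4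
  (l 792098) (l 21159203) (l 18046243) (l 662979))) (l 417955) (l 24898)) (n 2 5 (n 1 2 (l 694562)
  (l 700578) (l 697538) (l 695618)) (l 317635) (l 414915) (l 24898)) (l 24770))) (f 2 (n 1 2 (n 1
  3 (n 1 4 (n 2 3 (l 9868834) (l 309410) (l 406690) (l 12738)) (l 300610) (l 303650) (l 661923))
  (l 300482) (l 303522) (n 1 4 (l 565699) (l 300610) (l 303650) (l 662979))) (n 2 3 (n 1 3 (l
  398754) (l 311458) (l 308418) (l 10758)) (l 536739) (n 1 4 (l 398882) (l 21147043) (l 18034083)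
  (n 1 5 (l 399010) (l 25341347) (l 22228387) (l 794179))) (l 12738)) (n 2 3 (n 1 3 (l 301474) (l
  311458) (l 308418) (l 302530)) (l 533699) (l 436419) (l 12738)) (l 12482)) (n 1 2 (n 1 3 (n 2 4
  (n 3 5 (l 718448163) (l 25597219) (l 22484259) (l 800931)) (l 21271971) (l 18159011) (l 665763))
  (n 1 4 (n 2 3 (l 18004259) (l 17999299) (l 409763) (l 534691)) (l 660931) (l 563651) (l 661795))
  (n 2 3 (n 1 4 (l 18101539) (l 663971) (l 18032035) (l 661795)) (l 309443) (l 406723) (l 534691))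
  (l 530723)) (n 1 3 (n 1 4 (n 2 3 (l 18000291) (l 536739) (l 18003267) (l 407715)) (l 660803) (l
  563523) (l 661923)) (l 529731) (l 432451) (n 1 4 (l 565699) (l 660803) (l 563523) (l 662979)))
  (n 2 4 (n 2 3 (n 1 3 (l 18127267) (l 18137251) (l 18134211) (l 311491)) (l 533699) (l 436419) (l
  569795)) (l 664771) (l 567491) (n 2 3 (l 666019) (l 533699) (l 436419) (l 667075))) (n 1 3 (l
  434499) (n 1 4 (l 565571) (l 660931) (l 563651) (l 662851)) (n 2 3 (l 438467) (l 309443) (l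
  406723) (l 535747)) (l 531779)))))))

end trees

theorem chkSDS : treeSDS.check 3 5 (okW 5 6 (finWin 4)) [(0, 2), (3, 4)] = true := by
  decide +kernel

theorem chkSDDS : treeSDDS.check 4 6 (okW 6 8 (finWin 6)) [(0, 2), (3, 4), (5, 6)] = true := by
  decide +kernel

theorem chkDDD : treeDDD.check 3 6 (okW 6 8 (finWin 5)) [(1, 2), (3, 4)] = true := by
  decide +kernel

theorem chkSSSSS : treeSSSSS.check 5 7 (okW 7 7 (finWin 8))
    [(0, 2), (2, 4), (4, 6), (6, 8)] = true := by
  decide +kernel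

theorem chkBase : treeBase.check 1 6 (okW 6 6 finCyc) [] = true := by
  decide +kernel

/-! ### Blocks in a graph -/

section blocks

variable {V : Type*}

/-- A block `(p, p', d)`: a matching edge `pp'` entered at `p`, and left through `p'` if `d`. -/
abbrev Blk (V : Type*) := V × V × Bool

def exV (b : Blk V) : V := if b.2.2 = true then b.2.1 else b.1

def ed (b : Blk V) : Sym2 V := s(b.1, b.2.1)

def inner (G : SimpleGraph V) : Blk V → List (Blk V) → Prop
  | _, [] => True
  | b, c :: w => G.Adj (exV b) c.1 ∧ inner G c w

def lastV : Blk V → List (Blk V) → V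
  | b, [] => exV b
  | _, c :: w => lastV c w

def Pth (G : SimpleGraph V) : V → List (Blk V) → V → Prop
  | u, [], v => G.Adj u v
  | u, b :: l, v => G.Adj u b.1 ∧ Pth G (exV b) l v

def wt : List (Blk V) → ℕ
  | [] => 0
  | b :: l => (1 + b.2.2.toNat) + wt l

theorem wt_append (l₁ l₂ : List (Blk V)) : wt (l₁ ++ l₂) = wt l₁ + wt l₂ := by
  induction l₁ with
  | nil => simp [wt]
  | cons b l ih => simp [wt, ih]; omega

theorem pth_cons_append (G : SimpleGraph V) (l₁ l₂ : List (Blk V)) (u v : V) (c : Blk V) :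
    Pth G u (l₁ ++ c :: l₂) v ↔ Pth G u l₁ c.1 ∧ Pth G (exV c) l₂ v := by
  induction l₁ generalizing u with
  | nil => simp [Pth]
  | cons b l ih => simp [Pth, ih, and_assoc]

theorem pth_inner (G : SimpleGraph V) (b : Blk V) (w R : List (Blk V)) (v : V) :
    Pth G (exV b) (w ++ R) v ↔ inner G b w ∧ Pth G (lastV b w) R v := by
  induction w generalizing b with
  | nil => simp [inner, lastV]
  | cons c l ih => simp [Pth, inner, lastV, ih, and_assoc]

/-- A proper cycle of length `n`, as a cyclic list of blocks. -/
def GoodC (G : SimpleGraph V) (M : Finset (Sym2 V)) (n : ℕ) (b : Blk V) (w : List (Blk V)) : Prop :=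
  Pth G (exV b) w b.1 ∧ (∀ c ∈ b :: w, ed c ∈ M) ∧ ((b :: w).map ed).Nodup ∧ wt (b :: w) = n

theorem GoodC.rotate {G : SimpleGraph V} {M : Finset (Sym2 V)} {n : ℕ} {b c : Blk V}
    {l₁ l₂ : List (Blk V)} (h : GoodC G M n b (l₁ ++ c :: l₂)) :
    GoodC G M n c (l₂ ++ b :: l₁) := by
  obtain ⟨h1, h2, h3, h4⟩ := h
  have hp : (b :: (l₁ ++ c :: l₂)).Perm (c :: (l₂ ++ b :: l₁)) :=
    List.perm_append_comm (l₁ := b :: l₁) (l₂ := c :: l₂)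
  refine ⟨?_, ?_, ?_, ?_⟩
  · rw [pth_cons_append] at h1 ⊢
    exact ⟨h1.2, h1.1⟩
  · intro x hx
    exact h2 x (hp.mem_iff.2 hx)
  · exact (hp.map ed).nodup_iff.1 h3
  · rw [← h4, show c :: (l₂ ++ b :: l₁) = (c :: l₂) ++ (b :: l₁) by simp,
      show b :: (l₁ ++ c :: l₂) = (b :: l₁) ++ (c :: l₂) by simp, wt_append, wt_append]
    omega

/-- The endpoint with code `v` in a list of matching edges. -/
def phi (D : List (V × V)) (d0 : V × V) (v : ℕ) : V :=
  if v % 2 = 0 then (D.getD (v / 2) d0).1 else (D.getD (v / 2) d0).2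

def toV (D : List (V × V)) (d0 : V × V) (b : ℕ) : Blk V :=
  (phi D d0 (b / 2), phi D d0 (flipN (b / 2)), Nat.beq (b % 2) 1)

theorem exV_toV (D : List (V × V)) (d0 : V × V) (b : ℕ) :
    exV (toV D d0 b) = phi D d0 (exN b) := by
  unfold exV toV exN
  by_cases h : b % 2 = 1 <;> simp [h]

theorem ed_toV (D : List (V × V)) (d0 : V × V) (b : ℕ) :
    ed (toV D d0 b) = s((D.getD (b / 4) d0).1, (D.getD (b / 4) d0).2) := by
  have e : b / 2 / 2 = b / 4 := by omega
  unfold ed toV phi flipN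
  by_cases h : (b / 2) % 2 = 0
  · have h1 : (b / 2 + 1) % 2 ≠ 0 := by omega
    have h2 : (b / 2 + 1) / 2 = b / 4 := by omega
    simp only [h, h1, h2, e, if_true, if_false]
  · have h1 : (b / 2 - 1) % 2 = 0 := by omega
    have h2 : (b / 2 - 1) / 2 = b / 4 := by omega
    simp only [h, h1, h2, e, if_true, if_false]
    exact Sym2.eq_swap

theorem known_adj {G : SimpleGraph V} {K : List (ℕ × ℕ)} {φ : ℕ → V}
    (hK : ∀ p ∈ K, G.Adj (φ p.1) (φ p.2)) {v w : ℕ} (h : knownB K v w = true) :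
    G.Adj (φ v) (φ w) := by
  unfold knownB at h
  rw [List.any_eq_true] at h
  obtain ⟨p, hp, h⟩ := h
  simp only [Bool.or_eq_true, Bool.and_eq_true, Nat.beq_eq] at h
  have := hK p hp
  rcases h with ⟨rfl, rfl⟩ | ⟨rfl, rfl⟩
  · exact this
  · exact this.symm

theorem inner_toV {G : SimpleGraph V} {K : List (ℕ × ℕ)} {D : List (V × V)} {d0 : V × V}
    (hK : ∀ p ∈ K, G.Adj (phi D d0 p.1) (phi D d0 p.2)) (b : ℕ) (w : List ℕ)
    (h : innerN K b w = true) : inner G (toV D d0 b) (w.map (toV D d0)) := by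
  induction w generalizing b with
  | nil => simp [inner]
  | cons c l ih =>
    simp only [innerN, Bool.and_eq_true] at h
    refine ⟨?_, ih c h.2⟩
    rw [exV_toV]
    exact known_adj hK h.1

theorem lastV_toV (D : List (V × V)) (d0 : V × V) (b : ℕ) (w : List ℕ) :
    lastV (toV D d0 b) (w.map (toV D d0)) = phi D d0 (lastN b w) := by
  induction w generalizing b with
  | nil => simp [lastV, lastN, exV_toV]
  | cons c l ih => simpa [lastV, lastN] using ih c

theorem wt_toV (D : List (V × V)) (d0 : V × V) (w : List ℕ) :
    wt (w.map (toV D d0)) = wtN w := by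
  induction w with
  | nil => simp [wt, wtN]
  | cons c l ih =>
    have : (Nat.beq (c % 2) 1).toNat = c % 2 := by
      rcases Nat.mod_two_eq_zero_or_one c with h | h <;> rw [h] <;> rfl
    simp only [List.map_cons, wt, wtN, ih]
    simp only [toV, this]

theorem nodup_toV {D : List (V × V)} {d0 : V × V}
    (hD : (D.map fun x => s(x.1, x.2)).Nodup) (w : List ℕ)
    (hlt : ∀ c ∈ w, c / 4 < D.length) (h : nodupN w = true) :
    ((w.map (toV D d0)).map ed).Nodup := by
  induction w with
  | nil => simp
  | cons c l ih =>
    simp only [nodupN, Bool.and_eq_true, List.all_eq_true] at h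
    simp only [List.map_cons, List.nodup_cons]
    refine ⟨?_, ih (fun x hx => hlt x (List.mem_cons_of_mem _ hx)) h.2⟩
    intro hm
    rw [List.map_map, List.mem_map] at hm
    obtain ⟨x, hx, hxe⟩ := hm
    have hne := h.1 x hx
    have h1 := hlt c (by simp)
    have h2 := hlt x (by simp [hx])
    simp only [Function.comp, ed_toV] at hxe
    rw [List.getD_eq_getElem _ _ h1, List.getD_eq_getElem _ _ h2] at hxe
    have := (List.Nodup.getElem_inj_iff hD (i := x / 4) (hi := by simpa using h2)
      (j := c / 4) (hj := by simpa using h1)).1 (by simpa using hxe)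
    simp [this] at hne

/-- Any two edges of a matching that is a strong clique are joined. -/
theorem joined {G : SimpleGraph V} {M : Finset (Sym2 V)}
    (hmatch : IsMatchingSet G ↑M) (hsc : IsStrongClique G ↑M) {e f : Sym2 V}
    (he : e ∈ M) (hf : f ∈ M) (hne : e ≠ f) : ∃ a b, a ∈ e ∧ b ∈ f ∧ G.Adj a b := by
  obtain ⟨a, b, ha, hb, h⟩ := hsc.2 e (by simpa using he) f (by simpa using hf)
  rcases h with rfl | h
  · exact absurd hb (hmatch.2 e (by simpa using he) f (by simpa using hf) hne a ha)
  · exact ⟨a, b, ha, hb, h⟩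

theorem local_step {G : SimpleGraph V} {M : Finset (Sym2 V)}
    (hmatch : IsMatchingSet G ↑M) (hsc : IsStrongClique G ↑M)
    (d0 : V × V) (D : List (V × V)) (hDM : ∀ x ∈ D, s(x.1, x.2) ∈ M)
    (hD : (D.map fun x => s(x.1, x.2)).Nodup)
    {k0 n : ℕ} {fin : List (ℕ × ℕ) → ℕ → ℕ → Bool} {t : CTree} {K : List (ℕ × ℕ)}
    (hF : ∀ j, k0 ≤ j → j < D.length → G.Adj (phi D d0 0) (phi D d0 (2 * j)) ∨
      G.Adj (phi D d0 1) (phi D d0 (2 * j)))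
    (hK : ∀ p ∈ K, G.Adj (phi D d0 p.1) (phi D d0 p.2))
    (ht : t.check k0 D.length (okW D.length n fin) K = true) :
    ∃ (b : Blk V) (w : List (Blk V)) (a z : ℕ) (K' : List (ℕ × ℕ)),
      b.1 = phi D d0 a ∧ lastV b w = phi D d0 z ∧ inner G b w ∧
      (∀ c ∈ b :: w, ∃ x ∈ D, ed c = s(x.1, x.2)) ∧ ((b :: w).map ed).Nodup ∧
      wt (b :: w) = n ∧ (∀ p ∈ K', G.Adj (phi D d0 p.1) (phi D d0 p.2)) ∧
      fin K' a z = true := by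
  have hJ : ∀ i j, i < j → j < D.length →
      G.Adj (phi D d0 (2 * i)) (phi D d0 (2 * j)) ∨
      G.Adj (phi D d0 (2 * i)) (phi D d0 (2 * j + 1)) ∨
      G.Adj (phi D d0 (2 * i + 1)) (phi D d0 (2 * j)) ∨
      G.Adj (phi D d0 (2 * i + 1)) (phi D d0 (2 * j + 1)) := by
    intro i j hij hj
    have hi : i < D.length := by omega
    have hne : s(D[i].1, D[i].2) ≠ s(D[j].1, D[j].2) := by
      intro h
      have := (List.Nodup.getElem_inj_iff hD (i := i) (hi := by simpa using hi)
        (j := j) (hj := by simpa using hj)).1 (by simpa using h)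
      omega
    obtain ⟨a, b, ha, hb, hab⟩ := joined hmatch hsc (hDM D[i] (List.getElem_mem _))
      (hDM D[j] (List.getElem_mem _)) hne
    have p0 : ∀ k (hk : k < D.length), phi D d0 (2 * k) = D[k].1 := by
      intro k hk
      simp [phi, hk]
    have p1 : ∀ k (hk : k < D.length), phi D d0 (2 * k + 1) = D[k].2 := by
      intro k hk
      have e : (2 * k + 1) / 2 = k := by omega
      simp [phi, e, hk]
    rw [p0 i hi, p0 j hj, p1 i hi, p1 j hj]
    rw [Sym2.mem_iff] at ha hb
    rcases ha with rfl | rfl <;> rcases hb with rfl | rfl <;> tauto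
  obtain ⟨K', W, hK', hW⟩ := CTree.sound (fun v w => G.Adj (phi D d0 v) (phi D d0 w))
    hJ hF t K ht hK
  cases W with
  | nil => simp [okW] at hW
  | cons b w =>
    simp only [okW, Bool.and_eq_true, List.all_eq_true, Nat.blt_eq, Nat.beq_eq] at hW
    obtain ⟨h1, h2, h3, h4, h5⟩ := hW
    refine ⟨toV D d0 b, w.map (toV D d0), b / 2, lastN b w, K', rfl, lastV_toV D d0 b w,
      inner_toV hK' b w h3, ?_, ?_, ?_, hK', h5⟩
    · rw [← List.map_cons]
      intro c hc
      obtain ⟨x, hx, rfl⟩ := List.mem_map.1 hc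
      refine ⟨D[x / 4]'(h1 x hx), List.getElem_mem _, ?_⟩
      rw [ed_toV, List.getD_eq_getElem _ _ (h1 x hx)]
    · rw [← List.map_cons]
      exact nodup_toV hD _ h1 h2
    · rw [← List.map_cons, wt_toV, h4]

/-- Spare matching edges, labelled so that their first endpoint is joined to `pp'`. -/
theorem exists_spare [DecidableEq V] {G : SimpleGraph V} {M : Finset (Sym2 V)}
    (hmatch : IsMatchingSet G ↑M) (hsc : IsStrongClique G ↑M) (p p' : V)
    (hp : s(p, p') ∈ M) (S : List (Sym2 V)) (hS : s(p, p') ∈ S) (r : ℕ)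
    (hr : S.length + r ≤ M.card) :
    ∃ U : List (V × V), U.length = r ∧ (∀ x ∈ U, s(x.1, x.2) ∈ M) ∧
      (U.map fun x => s(x.1, x.2)).Nodup ∧ (∀ x ∈ U, s(x.1, x.2) ∉ S) ∧
      ∀ x ∈ U, G.Adj p x.1 ∨ G.Adj p' x.1 := by
  have h1 : r ≤ (M \ S.toFinset).card := by
    have := Finset.le_card_sdiff S.toFinset M
    have := List.toFinset_card_le S
    omega
  obtain ⟨T, hT, hTr⟩ := Finset.exists_subset_card_eq h1
  have h2 : ∀ g : Sym2 V, g ∈ T → ∃ x : V × V, s(x.1, x.2) = g ∧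
      (G.Adj p x.1 ∨ G.Adj p' x.1) := by
    intro g hg
    have hg' := Finset.mem_sdiff.1 (hT hg)
    have hne : s(p, p') ≠ g := by
      rintro rfl
      exact hg'.2 (by simpa using hS)
    obtain ⟨a, b, ha, hb, hab⟩ := joined hmatch hsc hp hg'.1 hne
    refine ⟨(b, Sym2.Mem.other hb), Sym2.other_spec hb, ?_⟩
    rw [Sym2.mem_iff] at ha
    rcases ha with rfl | rfl
    · exact Or.inl hab
    · exact Or.inr hab
  haveI : Nonempty (V × V) := ⟨(p, p')⟩
  choose! F hF1 hF2 using h2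
  have hmap : (T.toList.map F).map (fun x => s(x.1, x.2)) = T.toList := by
    rw [List.map_map]
    conv_rhs => rw [← List.map_id T.toList]
    exact List.map_congr_left fun g hg => hF1 g (by simpa using hg)
  refine ⟨T.toList.map F, by simp [hTr], ?_, ?_, ?_, ?_⟩
  · intro x hx
    obtain ⟨g, hg, rfl⟩ := List.mem_map.1 hx
    have hg : g ∈ T := by simpa using hg
    rw [hF1 g hg]
    exact (Finset.mem_sdiff.1 (hT hg)).1
  · rw [hmap]
    exact T.nodup_toList
  · intro x hx
    obtain ⟨g, hg, rfl⟩ := List.mem_map.1 hx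
    have hg : g ∈ T := by simpa using hg
    rw [hF1 g hg]
    simpa using (Finset.mem_sdiff.1 (hT hg)).2
  · intro x hx
    obtain ⟨g, hg, rfl⟩ := List.mem_map.1 hx
    exact hF2 g (by simpa using hg)

theorem base_case [DecidableEq V] {G : SimpleGraph V} {M : Finset (Sym2 V)}
    (hmatch : IsMatchingSet G ↑M) (hsc : IsStrongClique G ↑M) (hM : 6 ≤ M.card) :
    ∃ b w, GoodC G M 6 b w := by
  obtain ⟨e, he⟩ := Finset.card_pos.1 (show 0 < M.card by omega)
  induction e using Sym2.ind with
  | _ p p' =>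
  obtain ⟨U, hUl, hUM, hUn, hUS, hUF⟩ :=
    exists_spare hmatch hsc p p' he [s(p, p')] (by simp) 5 (by simp; omega)
  have hl : ((p, p') :: U).length = 6 := by simp [hUl]
  have hDM : ∀ x ∈ (p, p') :: U, s(x.1, x.2) ∈ M := List.forall_mem_cons.2 ⟨he, hUM⟩
  obtain ⟨b, w, a, z, K', hb, hz, hi, hD, hn, hw, hK', hf⟩ :=
    local_step hmatch hsc (p, p') ((p, p') :: U) hDM
    (by
      rw [List.map_cons, List.nodup_cons]
      refine ⟨?_, hUn⟩
      intro hm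
      obtain ⟨x, hx, hxe⟩ := List.mem_map.1 hm
      exact hUS x hx (by simp [hxe]))
    (k0 := 1) (n := 6) (fin := finCyc) (t := treeBase) (K := [])
    (by
      intro j hj hj'
      obtain ⟨i, rfl⟩ : ∃ i, j = i + 1 := ⟨j - 1, by omega⟩
      have hi : i < U.length := by simpa using hj'
      have := hUF U[i] (List.getElem_mem _)
      simpa [phi, hi] using this)
    (by simp) (by rw [hl]; exact chkBase)
  refine ⟨b, w, ?_, ?_, hn, hw⟩
  · have := (pth_inner G b w [] b.1).2 ⟨hi, ?_⟩
    · simpa using this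
    · rw [hz, hb]
      exact known_adj hK' hf
  · intro c hc
    obtain ⟨x, hx, hxe⟩ := hD c hc
    rw [hxe]
    exact hDM x hx

theorem window_step [DecidableEq V] {G : SimpleGraph V} {M : Finset (Sym2 V)}
    (hmatch : IsMatchingSet G ↑M) (hsc : IsStrongClique G ↑M) {n : ℕ} {b : Blk V}
    {w R : List (Blk V)} (hg : GoodC G M n b (w ++ R)) (r e : ℕ) (t : CTree) (K : List (ℕ × ℕ))
    (hr : (b :: (w ++ R)).length + r ≤ M.card)
    (hK : ∀ U : List (V × V), ∀ p ∈ K,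
      G.Adj (phi ((b :: w).map (fun c => (c.1, c.2.1)) ++ U) (b.1, b.2.1) p.1)
        (phi ((b :: w).map (fun c => (c.1, c.2.1)) ++ U) (b.1, b.2.1) p.2))
    (he : ∀ U : List (V × V),
      phi ((b :: w).map (fun c => (c.1, c.2.1)) ++ U) (b.1, b.2.1) e = lastV b w)
    (ht : t.check (w.length + 1) (w.length + 1 + r)
      (okW (w.length + 1 + r) (wt (b :: w) + 2) (finWin e)) K = true) :
    ∃ b' w', GoodC G M (n + 2) b' w' := by
  obtain ⟨h1, h2, h3, h4⟩ := hg
  obtain ⟨U, hUl, hUM, hUn, hUS, hUF⟩ :=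
    exists_spare hmatch hsc b.1 b.2.1 (h2 b (by simp)) ((b :: (w ++ R)).map ed)
      (by simp [ed]) r (by simpa using hr)
  set D := (b :: w).map (fun c : Blk V => (c.1, c.2.1)) ++ U with hDdef
  have hl : D.length = w.length + 1 + r := by simp [hDdef, hUl]; omega
  have hmap : D.map (fun x => s(x.1, x.2)) = (b :: w).map ed ++ U.map (fun x => s(x.1, x.2)) := by
    simp [hDdef, ed, Function.comp_def]
  have hsplit : (b :: (w ++ R)).map ed = (b :: w).map ed ++ R.map ed := by simp
  have hDM : ∀ x ∈ D, s(x.1, x.2) ∈ M := by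
    intro x hx
    rcases List.mem_append.1 hx with hx | hx
    · obtain ⟨c, hc, rfl⟩ := List.mem_map.1 hx
      refine h2 c ?_
      rw [← List.cons_append]
      exact List.mem_append_left _ hc
    · exact hUM x hx
  have hn3 := h3
  rw [hsplit, List.nodup_append] at hn3
  have hDn : (D.map fun x => s(x.1, x.2)).Nodup := by
    rw [hmap, List.nodup_append]
    refine ⟨hn3.1, hUn, ?_⟩
    intro x hx y hy hxy
    obtain ⟨u, hu, rfl⟩ := List.mem_map.1 hy
    refine hUS u hu ?_
    rw [hsplit, ← hxy]
    exact List.mem_append_left _ hx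
  have hF : ∀ j, w.length + 1 ≤ j → j < D.length →
      G.Adj (phi D (b.1, b.2.1) 0) (phi D (b.1, b.2.1) (2 * j)) ∨
      G.Adj (phi D (b.1, b.2.1) 1) (phi D (b.1, b.2.1) (2 * j)) := by
    intro j hj hj'
    have hi : j - (w.length + 1) < U.length := by omega
    have := hUF U[j - (w.length + 1)] (List.getElem_mem _)
    have e2 : phi D (b.1, b.2.1) (2 * j) = (U[j - (w.length + 1)]).1 := by
      have : D[j] = U[j - (w.length + 1)] := by
        simp only [hDdef]
        rw [List.getElem_append_right (by simpa using hj)]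
        simp
      rw [← this]
      simp [phi, hj']
    rw [e2]
    simpa [phi, hDdef] using this
  obtain ⟨b', w', a, z, K', hb, hz, hi, hD, hn, hw, hK', hf⟩ :=
    local_step hmatch hsc (b.1, b.2.1) D hDM hDn (k0 := w.length + 1) (n := wt (b :: w) + 2)
      (fin := finWin e) (t := t) (K := K) hF (hK U) (by rw [hl]; exact ht)
  simp only [finWin, Bool.and_eq_true, Nat.beq_eq] at hf
  obtain ⟨rfl, rfl⟩ := hf
  have hb1 : b'.1 = b.1 := by
    rw [hb]
    simp [phi, hDdef]
  rw [he U] at hz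
  rw [pth_inner] at h1
  refine ⟨b', w' ++ R, ?_, ?_, ?_, ?_⟩
  · rw [pth_inner, hb1, hz]
    exact ⟨hi, h1.2⟩
  · rw [← List.cons_append]
    intro c hc
    rcases List.mem_append.1 hc with hc | hc
    · obtain ⟨x, hx, hxe⟩ := hD c hc
      rw [hxe]
      exact hDM x hx
    · exact h2 c (by simp [hc])
  · rw [← List.cons_append, List.map_append, List.nodup_append]
    refine ⟨hn, hn3.2.1, ?_⟩
    intro x hx y hy hxy
    obtain ⟨c, hc, rfl⟩ := List.mem_map.1 hx
    obtain ⟨u, hu, hue⟩ := hD c hc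
    have hm : ed c ∈ D.map (fun x => s(x.1, x.2)) := List.mem_map.2 ⟨u, hu, hue.symm⟩
    rw [hmap] at hm
    rcases List.mem_append.1 hm with hm | hm
    · exact hn3.2.2 _ hm _ hy hxy
    · obtain ⟨u', hu', hue'⟩ := List.mem_map.1 hm
      refine hUS u' hu' ?_
      rw [hue', hsplit, hxy]
      exact List.mem_append_right _ hy
  · rw [← List.cons_append, wt_append] at h4 ⊢
    omega

theorem length_le_wt (l : List (Blk V)) : l.length ≤ wt l := by
  induction l with
  | nil => simp
  | cons b l ih => simp [wt]; omega

theorem find_sd (b : Blk V) (l : List (Blk V)) (hb : b.2.2 = false)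
    (h : ∃ x ∈ l, x.2.2 = true) :
    ∃ A x y C, b :: l = A ++ x :: y :: C ∧ x.2.2 = false ∧ y.2.2 = true := by
  induction l generalizing b with
  | nil => simp at h
  | cons c l ih =>
    cases hc : c.2.2 with
    | true => exact ⟨[], b, c, l, by simp, hb, hc⟩
    | false =>
      obtain ⟨x, hx, hxt⟩ := h
      have hx' : x ∈ l := by
        rcases List.mem_cons.1 hx with rfl | h
        · simp [hc] at hxt
        · exact h
      obtain ⟨A, x, y, C, h1, h2, h3⟩ := ih c hc ⟨x, hx', hxt⟩
      exact ⟨b :: A, x, y, C, by simp [h1], h2, h3⟩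

theorem GoodC.rotate' {G : SimpleGraph V} {M : Finset (Sym2 V)} {n : ℕ} {b c : Blk V}
    {l A C : List (Blk V)} (h : GoodC G M n b l) (e : b :: l = A ++ c :: C) :
    GoodC G M n c (C ++ A) := by
  cases A with
  | nil =>
    obtain ⟨rfl, rfl⟩ := List.cons.inj e
    simpa using h
  | cons a A =>
    obtain ⟨rfl, rfl⟩ := List.cons.inj e
    exact h.rotate

theorem step [DecidableEq V] {G : SimpleGraph V} {M : Finset (Sym2 V)}
    (hmatch : IsMatchingSet G ↑M) (hsc : IsStrongClique G ↑M) {n : ℕ} (hn : 6 ≤ n)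
    (hM : n + 2 ≤ M.card) (h : ∃ b w, GoodC G M n b w) : ∃ b w, GoodC G M (n + 2) b w := by
  -- three consecutive doubles
  have ddd : ∀ (b c d : Blk V) (R : List (Blk V)), b.2.2 = true → c.2.2 = true → d.2.2 = true →
      GoodC G M n b (c :: d :: R) → ∃ b w, GoodC G M (n + 2) b w := by
    intro b c d R hb hc hd hg
    have hw := hg.2.2.2
    have hlR := length_le_wt R
    simp only [wt, hb, hc, hd, Bool.toNat_true] at hw
    have hp := hg.1
    simp only [Pth, exV, hb, hc, hd, if_true] at hp
    refine window_step (w := [c, d]) hmatch hsc hg 3 5 treeDDD [(1, 2), (3, 4)] ?_ ?_ ?_ ?_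
    · simp; omega
    · intro U
      simp [phi, hp.1, hp.2.1]
    · intro U
      simp [phi, lastV, exV, hd]
    · simpa [wt, hb, hc, hd] using chkDDD
  obtain ⟨b, w, hg⟩ := h
  by_cases hall : ∀ x ∈ b :: w, x.2.2 = true
  · have hw := hg.2.2.2
    match w, hg, hall, hw with
    | [], _, hall, hw => simp [wt, hall] at hw; omega
    | [c], _, hall, hw => simp [wt, hall] at hw; omega
    | c :: d :: R, hg, hall, hw =>
      exact ddd b c d R (hall _ (by simp)) (hall _ (by simp)) (hall _ (by simp)) hg
  by_cases hnone : ∀ x ∈ b :: w, x.2.2 = false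
  · have hw := hg.2.2.2
    match w, hg, hnone, hw with
    | [], _, hnone, hw => simp [wt, hnone] at hw; omega
    | [c], _, hnone, hw => simp [wt, hnone] at hw; omega
    | [c, d], _, hnone, hw => simp [wt, hnone] at hw; omega
    | [c, d, e], _, hnone, hw => simp [wt, hnone] at hw; omega
    | c :: d :: e :: f :: R, hg, hnone, hw =>
      simp only [List.mem_cons, forall_eq_or_imp] at hnone
      obtain ⟨hb, hc, hd, he, hf, -⟩ := hnone
      have hlR := length_le_wt R
      simp only [wt, hb, hc, hd, he, hf, Bool.toNat_false] at hw
      have hp := hg.1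
      simp only [Pth, exV, hb, hc, hd, he, hf] at hp
      simp at hp
      refine window_step (w := [c, d, e, f]) hmatch hsc hg 2 8 treeSSSSS
        [(0, 2), (2, 4), (4, 6), (6, 8)] ?_ ?_ ?_ ?_
      · simp; omega
      · intro U
        simp [phi, hp.1, hp.2.1, hp.2.2.1, hp.2.2.2.1]
      · intro U
        simp [phi, lastV, exV, hf]
      · simpa [wt, hb, hc, hd, he, hf] using chkSSSSS
  push Not at hall hnone
  obtain ⟨x, hx, hxf⟩ := hall
  obtain ⟨y, hy, hyt⟩ := hnone
  have hxf : x.2.2 = false := by simpa using hxf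
  have hyt : y.2.2 = true := by simpa using hyt
  obtain ⟨A, C, hAC⟩ := List.append_of_mem hx
  have hg2 := hg.rotate' hAC
  have hy2 : y ∈ C ++ A := by
    rw [hAC] at hy
    simp only [List.mem_append, List.mem_cons] at hy ⊢
    rcases hy with h | rfl | h
    · exact Or.inr h
    · simp [hxf] at hyt
    · exact Or.inl h
  obtain ⟨A', b, c, C', hAC', hb, hc⟩ := find_sd x (C ++ A) hxf ⟨y, hy2, hyt⟩
  have hg3 := hg2.rotate' hAC'
  rw [List.cons_append] at hg3
  generalize C' ++ A' = R at hg3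
  have hw := hg3.2.2.2
  match R, hg3, hw with
  | [], _, hw => simp [wt, hb, hc] at hw; omega
  | d :: R, hg3, hw =>
    cases hd : d.2.2 with
    | false =>
      have hlR := length_le_wt R
      simp only [wt, hb, hc, hd, Bool.toNat_false, Bool.toNat_true] at hw
      have hp := hg3.1
      simp only [Pth, exV, hb, hc, hd] at hp
      simp at hp
      refine window_step (w := [c, d]) hmatch hsc hg3 2 4 treeSDS [(0, 2), (3, 4)] ?_ ?_ ?_ ?_
      · simp; omega
      · intro U
        simp [phi, hp.1, hp.2.1]
      · intro U
        simp [phi, lastV, exV, hd]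
      · simpa [wt, hb, hc, hd] using chkSDS
    | true =>
      match R, hg3, hw with
      | [], _, hw => simp [wt, hb, hc, hd] at hw; omega
      | e :: R, hg3, hw =>
        cases he : e.2.2 with
        | true =>
          refine ddd c d e (R ++ [b]) hc hd he ?_
          exact GoodC.rotate (l₁ := []) hg3
        | false =>
          have hlR := length_le_wt R
          simp only [wt, hb, hc, hd, he, Bool.toNat_false, Bool.toNat_true] at hw
          have hp := hg3.1
          simp only [Pth, exV, hb, hc, hd, he] at hp
          simp at hp
          refine window_step (w := [c, d, e]) hmatch hsc hg3 2 6 treeSDDS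
            [(0, 2), (3, 4), (5, 6)] ?_ ?_ ?_ ?_
          · simp; omega
          · intro U
            simp [phi, hp.1, hp.2.1, hp.2.2.1]
          · intro U
            simp [phi, lastV, exV, he]
          · simpa [wt, hb, hc, hd, he] using chkSDDS

theorem exists_good [DecidableEq V] {G : SimpleGraph V} {M : Finset (Sym2 V)}
    (hmatch : IsMatchingSet G ↑M) (hsc : IsStrongClique G ↑M) (m : ℕ) (hm : 3 ≤ m)
    (hM : 2 * m ≤ M.card) : ∃ b w, GoodC G M (2 * m) b w := by
  induction m, hm using Nat.le_induction with
  | base => exact base_case hmatch hsc hM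
  | succ k hk ih => exact step (n := 2 * k) hmatch hsc (by omega) hM (ih (by omega))

/-! ### From block lists to cycles -/

def verts (b : Blk V) : List V := if b.2.2 = true then [b.1, b.2.1] else [b.1]

theorem mem_ed_of_mem_verts {b : Blk V} {v : V} (h : v ∈ verts b) : v ∈ ed b := by
  unfold verts at h
  unfold ed
  split_ifs at h <;> simp at h <;> simp [h]

theorem nodup_verts {G : SimpleGraph V} {M : Finset (Sym2 V)} (hmatch : IsMatchingSet G ↑M)
    (l : List (Blk V)) (hM : ∀ c ∈ l, ed c ∈ M) (hn : (l.map ed).Nodup) :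
    (l.flatMap verts).Nodup := by
  induction l with
  | nil => simp
  | cons b l ih =>
    rw [List.map_cons, List.nodup_cons] at hn
    rw [List.flatMap_cons, List.nodup_append]
    refine ⟨?_, ih (fun c hc => hM c (by simp [hc])) hn.2, ?_⟩
    · have : G.Adj b.1 b.2.1 := hmatch.1 (by simpa using hM b (by simp))
      unfold verts
      split_ifs <;> simp [this.ne]
    · intro x hx y hy hxy
      subst hxy
      obtain ⟨c, hc, hxc⟩ := List.mem_flatMap.1 hy
      refine hmatch.2 (ed b) (by simpa using hM b (by simp)) (ed c)
        (by simpa using hM c (by simp [hc])) ?_ x (mem_ed_of_mem_verts hx) (mem_ed_of_mem_verts hxc)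
      intro he
      exact hn.1 (List.mem_map.2 ⟨c, hc, he.symm⟩)

theorem exists_walk {G : SimpleGraph V} (l : List (Blk V)) (hE : ∀ c ∈ l, G.Adj c.1 c.2.1)
    (u v : V) (h : Pth G u l v) :
    ∃ p : G.Walk u v, p.support = u :: (l.flatMap verts ++ [v]) ∧ p.length = wt l + 1 := by
  induction l generalizing u with
  | nil =>
    have h' : G.Adj u v := h
    exact ⟨SimpleGraph.Walk.cons h' .nil, by simp, by simp [wt]⟩
  | cons b l ih =>
    obtain ⟨h1, h2⟩ := h
    obtain ⟨p, hp1, hp2⟩ := ih (fun c hc => hE c (by simp [hc])) _ h2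
    have hb := hE b (by simp)
    cases hd : b.2.2 with
    | false =>
      have e : exV b = b.1 := by simp [exV, hd]
      refine ⟨SimpleGraph.Walk.cons h1 (p.copy e rfl), ?_, ?_⟩
      · simp [hp1, verts, hd, e]
      · simp [hp2, wt, hd]; omega
    | true =>
      have e : exV b = b.2.1 := by simp [exV, hd]
      refine ⟨SimpleGraph.Walk.cons h1 (SimpleGraph.Walk.cons hb (p.copy e rfl)), ?_, ?_⟩
      · simp [hp1, verts, hd, e]
      · simp [hp2, wt, hd]; omega

theorem isCycle_of_support {G : SimpleGraph V} {u : V} (p : G.Walk u u)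
    (hs : p.support.tail.Nodup) (hl : 3 ≤ p.length) : p.IsCycle := by
  cases p with
  | nil => simp at hl
  | cons h q =>
    have hq : q.IsPath := by
      rw [SimpleGraph.Walk.isPath_def]
      simpa using hs
    rw [SimpleGraph.Walk.cons_isCycle_iff]
    refine ⟨hq, fun hm => ?_⟩
    have := hq.length_eq_one_of_mem_edges (by rwa [Sym2.eq_swap])
    simp at hl
    omega

theorem cycle_of_good {G : SimpleGraph V} {M : Finset (Sym2 V)} (hmatch : IsMatchingSet G ↑M)
    {n : ℕ} (hn : 3 ≤ n) {b : Blk V} {w : List (Blk V)} (h : GoodC G M n b w) :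
    ∃ (v : V) (C : G.Walk v v), C.IsCycle ∧ C.length = n := by
  obtain ⟨h1, h2, h3, h4⟩ := h
  have hE : ∀ c ∈ b :: w, G.Adj c.1 c.2.1 := fun c hc => hmatch.1 (by simpa using h2 c hc)
  have hnd := nodup_verts hmatch _ h2 h3
  obtain ⟨p, hp1, hp2⟩ := exists_walk w (fun c hc => hE c (by simp [hc])) _ _ h1
  cases hd : b.2.2 with
  | false =>
    have e : exV b = b.1 := by simp [exV, hd]
    refine ⟨b.1, p.copy e rfl, ?_, ?_⟩
    · apply isCycle_of_support
      · have hperm : (w.flatMap verts ++ [b.1]).Perm ((b :: w).flatMap verts) := by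
          simp [verts, hd]
        simpa [hp1] using hperm.nodup_iff.2 hnd
      · simp [wt, hd] at h4
        simp [hp2]; omega
    · simp [wt, hd] at h4
      simp [hp2]; omega
  | true =>
    have e : exV b = b.2.1 := by simp [exV, hd]
    have hb := hE b (by simp)
    refine ⟨b.1, SimpleGraph.Walk.cons hb (p.copy e rfl), ?_, ?_⟩
    · apply isCycle_of_support
      · have hperm : (b.2.1 :: (w.flatMap verts ++ [b.1])).Perm ((b :: w).flatMap verts) := by
          simpa [verts, hd] using
            List.perm_append_comm (l₁ := b.2.1 :: w.flatMap verts) (l₂ := [b.1])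
        simpa [hp1, e] using hperm.nodup_iff.2 hnd
      · simp [wt, hd] at h4
        simp [hp2]; omega
    · simp [wt, hd] at h4
      simp [hp2]; omega

end blocks

end StrongCyc

/-- Let `M` be a matching of `G` that is also a strong clique of `G`. If `|M| = 2m ≥ 6`,
then `G` contains a cycle of length `2m`. -/
theorem stmt17 {V : Type*} [Fintype V] [DecidableEq V] (G : SimpleGraph V)
    (M : Finset (Sym2 V))
    (hmatch : IsMatchingSet G ↑M) (hsc : IsStrongClique G ↑M)
    (m : ℕ) (hm : M.card = 2 * m) (hm3 : 3 ≤ m) :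
    ∃ (v : V) (C : G.Walk v v), C.IsCycle ∧ C.length = 2 * m := by
  obtain ⟨b, w, h⟩ := StrongCyc.exists_good hmatch hsc m hm3 hm.ge
  exact StrongCyc.cycle_of_good hmatch (by omega) h
end
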